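/- Let 2 ≤ r < m and g ≥ 3 be integers. If there exists a finite planar ({r,m};g)-graph, then r(2−g) + 2g > 0; equivalently, the triplet ({r,m};g) satisfies one of: g = 3 and 2 ≤ r ≤ 5; g = 4 and 2 ≤ r ≤ 3; g = 5 and 2 ≤ r ≤ 3; or g ≥ 6 and r = 2. -/

import Mathlib

open SimpleGraph

/-- `H` is a minor of `G`: there is an assignment of pairwise disjoint connected
branch sets in `G` to the vertices of `H`, with an edge of `G` between the branch
sets of any two adjacent vertices of `H`. -/
def SimpleGraph.IsMinorOf {W V : Type*} (H : SimpleGraph W) (G : SimpleGraph V) : Prop :=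
  ∃ f : W → Set V,
    (∀ w, (G.induce (f w)).Connected) ∧
    (Pairwise fun w₁ w₂ => Disjoint (f w₁) (f w₂)) ∧
    ∀ ⦃w₁ w₂⦄, H.Adj w₁ w₂ → ∃ v₁ ∈ f w₁, ∃ v₂ ∈ f w₂, G.Adj v₁ v₂

/-- A graph is planar iff it has no `K₅` minor and no `K₃,₃` minor (Wagner's theorem). -/
def SimpleGraph.IsPlanar {V : Type*} (G : SimpleGraph V) : Prop :=
  ¬ (completeGraph (Fin 5)).IsMinorOf G ∧
    ¬ (completeBipartiteGraph (Fin 3) (Fin 3)).IsMinorOf G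

/-- A graph is outerplanar iff it has no `K₄` minor and no `K₂,₃` minor. -/
def SimpleGraph.IsOuterplanar {V : Type*} (G : SimpleGraph V) : Prop :=
  ¬ (completeGraph (Fin 4)).IsMinorOf G ∧
    ¬ (completeBipartiteGraph (Fin 2) (Fin 3)).IsMinorOf G

/-- The degree of a vertex, as the cardinality of its neighbour set. -/
noncomputable def SimpleGraph.degN {V : Type*} (G : SimpleGraph V) (v : V) : ℕ :=
  (G.neighborSet v).ncard

/-- An `({r,m};g)`-graph: girth `g`, every vertex has degree `r` or `m`, both occur. -/
def IsBigirthGraph {V : Type*} (G : SimpleGraph V) (r m g : ℕ) : Prop :=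
  G.girth = g ∧ (∀ v, G.degN v = r ∨ G.degN v = m) ∧
    (∃ v, G.degN v = r) ∧ (∃ v, G.degN v = m)

/-- The set of orders of finite planar `({r,m};g)`-graphs. -/
def bicageOrders (r m g : ℕ) : Set ℕ :=
  {n | ∃ (V : Type) (_ : Fintype V) (G : SimpleGraph V),
    G.IsPlanar ∧ IsBigirthGraph G r m g ∧ Fintype.card V = n}


section PlanarEuler

open scoped Classical

/-- `T` is nonempty and cannot be split without an edge across. -/
def Cn {V : Type} (H : SimpleGraph V) (T : Finset V) : Prop :=
  T.Nonempty ∧ ∀ A ⊆ T, A.Nonempty → A ≠ T → ∃ p ∈ A, ∃ q ∈ T, q ∉ A ∧ H.Adj p q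

/-- Some edge joins `X` and `Y`. -/
def At {V : Type} (H : SimpleGraph V) (X Y : Finset V) : Prop :=
  ∃ p ∈ X, ∃ q ∈ Y, H.Adj p q

/-- `K` is a component of `Z`. -/
def Cp {V : Type} (H : SimpleGraph V) (Z K : Finset V) : Prop :=
  K ⊆ Z ∧ Cn H K ∧ ∀ k ∈ K, ∀ z ∈ Z, H.Adj k z → z ∈ K

/-- Finset version of minors. -/
def Mn {W V : Type} (K : SimpleGraph W) (H : SimpleGraph V) : Prop :=
  ∃ f : W → Finset V, (∀ w, Cn H (f w)) ∧ (∀ w w', w ≠ w' → Disjoint (f w) (f w')) ∧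
    ∀ w w', K.Adj w w' → At H (f w) (f w')

lemma At.symm {V : Type} {H : SimpleGraph V} {X Y : Finset V} (h : At H X Y) : At H Y X := by
  obtain ⟨p, hp, q, hq, hh⟩ := h
  exact ⟨q, hq, p, hp, hh.symm⟩

lemma At.mono {V : Type} {H : SimpleGraph V} {X Y X' Y' : Finset V} (h : At H X Y)
    (hX : X ⊆ X') (hY : Y ⊆ Y') : At H X' Y' := by
  obtain ⟨p, hp, q, hq, hh⟩ := h
  exact ⟨p, hX hp, q, hY hq, hh⟩

lemma Cn.singleton {V : Type} (H : SimpleGraph V) (v : V) : Cn H {v} := by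
  refine ⟨by simp, fun A hA hne hT => ?_⟩
  rcases Finset.subset_singleton_iff.1 hA with h | h
  · simp [h] at hne
  · exact absurd h hT

lemma Cn.union {V : Type} {H : SimpleGraph V} {X Y : Finset V} (hX : Cn H X) (hY : Cn H Y)
    (h : At H X Y) : Cn H (X ∪ Y) := by
  refine ⟨hX.1.mono Finset.subset_union_left, fun A hA hne hT => ?_⟩
  by_cases h1 : (A ∩ X).Nonempty ∧ A ∩ X ≠ X
  · obtain ⟨p, hp, q, hq, hq', hh⟩ := hX.2 (A ∩ X) Finset.inter_subset_right h1.1 h1.2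
    exact ⟨p, by grind, q, by grind, by grind, hh⟩
  by_cases h2 : (A ∩ Y).Nonempty ∧ A ∩ Y ≠ Y
  · obtain ⟨p, hp, q, hq, hq', hh⟩ := hY.2 (A ∩ Y) Finset.inter_subset_right h2.1 h2.2
    exact ⟨p, by grind, q, by grind, by grind, hh⟩
  have h1' : A ∩ X = ∅ ∨ X ⊆ A := by
    by_cases h3 : (A ∩ X).Nonempty
    · right
      have : A ∩ X = X := by by_contra h4; exact h1 ⟨h3, h4⟩
      exact Finset.inter_eq_right.1 this
    · left; exact Finset.not_nonempty_iff_eq_empty.1 h3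
  have h2' : A ∩ Y = ∅ ∨ Y ⊆ A := by
    by_cases h3 : (A ∩ Y).Nonempty
    · right
      have : A ∩ Y = Y := by by_contra h4; exact h2 ⟨h3, h4⟩
      exact Finset.inter_eq_right.1 this
    · left; exact Finset.not_nonempty_iff_eq_empty.1 h3
  obtain ⟨p, hp, q, hq, hh⟩ := h
  rcases h1' with h1' | h1' <;> rcases h2' with h2' | h2'
  · obtain ⟨c, hc⟩ := hne
    have := hA hc
    exfalso
    rcases Finset.mem_union.1 this with h5 | h5
    · have : c ∈ A ∩ X := Finset.mem_inter.2 ⟨hc, h5⟩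
      simp [h1'] at this
    · have : c ∈ A ∩ Y := Finset.mem_inter.2 ⟨hc, h5⟩
      simp [h2'] at this
  · refine ⟨q, h2' hq, p, Finset.mem_union_left _ hp, fun h6 => ?_, hh.symm⟩
    have : p ∈ A ∩ X := Finset.mem_inter.2 ⟨h6, hp⟩
    simp [h1'] at this
  · refine ⟨p, h1' hp, q, Finset.mem_union_right _ hq, fun h6 => ?_, hh⟩
    have : q ∈ A ∩ Y := Finset.mem_inter.2 ⟨h6, hq⟩
    simp [h2'] at this
  · exact absurd (Finset.Subset.antisymm hA (Finset.union_subset h1' h2')) hT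

lemma exists_Cp {V : Type} (H : SimpleGraph V) (Z : Finset V) (b : V) (hb : b ∈ Z) :
    ∃ K, Cp H Z K ∧ b ∈ K := by
  have hne : (Z.powerset.filter (fun K => Cn H K ∧ b ∈ K)).Nonempty :=
    ⟨{b}, by simp [hb, Cn.singleton]⟩
  obtain ⟨K, hK, hmax⟩ := Finset.exists_max_image _ Finset.card hne
  simp only [Finset.mem_filter, Finset.mem_powerset] at hK hmax
  refine ⟨K, ⟨hK.1, hK.2.1, fun k hk z hz hadj => ?_⟩, hK.2.2⟩
  by_contra hzK
  have := hmax (K ∪ {z}) ⟨Finset.union_subset hK.1 (by simpa using hz),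
    hK.2.1.union (Cn.singleton H z) ⟨k, hk, z, by simp, hadj⟩, by simp [hK.2.2]⟩
  rw [Finset.card_union_of_disjoint (by simpa using hzK)] at this
  simp at this

lemma Cp.eq_of_mem {V : Type} {H : SimpleGraph V} {Z K L : Finset V} (hK : Cp H Z K)
    (hL : Cp H Z L) {c : V} (hc : c ∈ K) (hc' : c ∈ L) : K = L := by
  have key : ∀ K L : Finset V, Cp H Z K → Cp H Z L → c ∈ K → c ∈ L → K ⊆ L := by
    intro K L hK hL hc hc'
    by_contra hn
    obtain ⟨p, hp, q, hq, hq', hh⟩ := hK.2.1.2 (K ∩ L) Finset.inter_subset_left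
      ⟨c, by simp [hc, hc']⟩ (fun h => hn (Finset.inter_eq_left.1 h))
    have := hL.2.2 p (by grind) q (hK.1 hq) hh
    grind
  exact (key K L hK hL hc hc').antisymm (key L K hL hK hc' hc)

/-- Number of neighbours of `v` in `T`. -/
noncomputable def nb {V : Type} (H : SimpleGraph V) (T : Finset V) (v : V) : ℕ :=
  (T.filter (fun u => H.Adj v u)).card

lemma nb_union {V : Type} (H : SimpleGraph V) {T U : Finset V} (h : Disjoint T U) (v : V) :
    nb H (T ∪ U) v = nb H T v + nb H U v := by
  unfold nb
  rw [Finset.filter_union, Finset.card_union_of_disjoint]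
  exact Finset.disjoint_filter_filter h

/-- Twice the number of edges in `T`. -/
noncomputable def ro {V : Type} (H : SimpleGraph V) (T : Finset V) : ℕ := ∑ v ∈ T, nb H T v

/-- Number of edges between `T` and `U`. -/
noncomputable def cr {V : Type} (H : SimpleGraph V) (T U : Finset V) : ℕ := ∑ v ∈ T, nb H U v

lemma cr_comm {V : Type} (H : SimpleGraph V) (T U : Finset V) : cr H T U = cr H U T := by
  unfold cr nb
  simp only [Finset.card_filter]
  rw [Finset.sum_comm]
  simp only [H.adj_comm]

lemma cr_union {V : Type} (H : SimpleGraph V) {T U : Finset V} (h : Disjoint T U) (X : Finset V) :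
    cr H (T ∪ U) X = cr H T X + cr H U X := by
  unfold cr
  rw [Finset.sum_union h]

lemma cr_union_right {V : Type} (H : SimpleGraph V) {T U : Finset V} (h : Disjoint T U)
    (X : Finset V) : cr H X (T ∪ U) = cr H X T + cr H X U := by
  rw [cr_comm, cr_union H h, cr_comm H T, cr_comm H U]

lemma ro_insert {V : Type} (H : SimpleGraph V) (T : Finset V) (z : V) (hz : z ∉ T) :
    ro H (insert z T) = ro H T + 2 * nb H T z := by
  have h1 : ro H (insert z T) = cr H ({z} ∪ T) ({z} ∪ T) := rfl
  have hd : Disjoint {z} T := by simpa using hz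
  rw [h1, cr_union H hd, cr_union_right H hd, cr_union_right H hd, cr_comm H T {z}]
  have h2 : cr H {z} {z} = 0 := by simp [cr, nb]
  have h3 : cr H {z} T = nb H T z := by simp [cr]
  have h4 : cr H T T = ro H T := rfl
  rw [h2, h3, h4]; ring

lemma ro_even {V : Type} (H : SimpleGraph V) (T : Finset V) : Even (ro H T) := by
  induction T using Finset.induction_on with
  | empty => simp [ro]
  | insert z T hz ih => rw [ro_insert H T z hz]; exact ih.add (even_two_mul _)

lemma ro_ge {V : Type} {H : SimpleGraph V} {T : Finset V} (hT : Cn H T) :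
    2 * T.card ≤ ro H T + 2 := by
  obtain ⟨t, ht⟩ := hT.1
  have hne : (T.powerset.filter (fun K => t ∈ K ∧ 2 * K.card ≤ ro H K + 2)).Nonempty :=
    ⟨{t}, by simp [ht]⟩
  obtain ⟨K, hK, hmax⟩ := Finset.exists_max_image _ Finset.card hne
  simp only [Finset.mem_filter, Finset.mem_powerset] at hK hmax
  by_cases hKT : K = T
  · rw [← hKT]; exact hK.2.2
  obtain ⟨p, hp, q, hq, hq', hh⟩ := hT.2 K hK.1 ⟨t, hK.2.1⟩ hKT
  have h1 : 1 ≤ nb H K q := Finset.card_pos.2 ⟨p, by simp [hp, hh.symm]⟩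
  have := hmax (insert q K) ⟨Finset.insert_subset hq hK.1, by simp [hK.2.1], by
    rw [ro_insert H K q hq', Finset.card_insert_of_notMem hq']; omega⟩
  rw [Finset.card_insert_of_notMem hq'] at this
  omega

/-- `D` induces a cycle. -/
def Cy {V : Type} (H : SimpleGraph V) (D : Finset V) : Prop :=
  Cn H D ∧ ∀ v ∈ D, nb H D v = 2

lemma Cy.cr_eq {V : Type} {H : SimpleGraph V} {D T : Finset V} (hD : Cy H D) (hT : T ⊆ D) :
    2 * T.card = ro H T + cr H T (D \ T) := by
  have h1 : cr H T D = 2 * T.card := by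
    unfold cr
    rw [Finset.sum_congr rfl (fun v hv => hD.2 v (hT hv))]
    simp [mul_comm]
  have h2 : D = T ∪ (D \ T) := (Finset.union_sdiff_of_subset hT).symm
  rw [← h1]
  conv_lhs => rw [h2]
  rw [cr_union_right H Finset.disjoint_sdiff]; rfl

lemma Cy.cr_even {V : Type} {H : SimpleGraph V} {D T : Finset V} (hD : Cy H D) (hT : T ⊆ D) :
    Even (cr H T (D \ T)) := by
  have h1 := hD.cr_eq hT
  have h2 := ro_even H T
  have h3 : Even (ro H T + cr H T (D \ T)) := by rw [← h1]; exact even_two_mul _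
  exact (Nat.even_add.1 h3).1 h2

lemma cr_pos {V : Type} {H : SimpleGraph V} {T U : Finset V} : 0 < cr H T U ↔ At H T U := by
  unfold cr At nb
  rw [Finset.sum_pos_iff]
  constructor
  · rintro ⟨p, hp, h⟩
    obtain ⟨q, hq⟩ := Finset.card_pos.1 h
    simp only [Finset.mem_filter] at hq
    exact ⟨p, hp, q, hq.1, hq.2⟩
  · rintro ⟨p, hp, q, hq, h⟩
    exact ⟨p, hp, Finset.card_pos.2 ⟨q, by simp [hq, h]⟩⟩

lemma Cy.cr_ge {V : Type} {H : SimpleGraph V} {D T : Finset V} (hD : Cy H D) (hT : T ⊆ D)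
    (hne : T.Nonempty) (hn : T ≠ D) : 2 ≤ cr H T (D \ T) := by
  obtain ⟨p, hp, q, hq, hq', hh⟩ := hD.1.2 T hT hne hn
  have h1 : 0 < cr H T (D \ T) := cr_pos.2 ⟨p, hp, q, by simp [hq, hq'], hh⟩
  obtain ⟨k, hk⟩ := hD.cr_even hT
  omega

lemma Cy.cr_le {V : Type} {H : SimpleGraph V} {D T : Finset V} (hD : Cy H D) (hT : T ⊆ D)
    (hc : Cn H T) : cr H T (D \ T) ≤ 2 := by
  have h1 := hD.cr_eq hT
  have h2 := ro_ge hc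
  omega

/-- The complement of an arc is an arc. -/
lemma Cy.compl {V : Type} {H : SimpleGraph V} {D T : Finset V} (hD : Cy H D) (hT : T ⊆ D)
    (hc : Cn H T) (hn : T ≠ D) : Cn H (D \ T) := by
  refine ⟨?_, fun A hA hne hA' => ?_⟩
  · rw [Finset.sdiff_nonempty]
    exact fun h => hn (hT.antisymm h)
  by_contra hcon
  push Not at hcon
  set B := (D \ T) \ A with hB
  have hBne : B.Nonempty := by
    rw [hB, Finset.sdiff_nonempty]; exact fun h => hA' (hA.antisymm h)
  have hAD : A ⊆ D := hA.trans Finset.sdiff_subset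
  have hBD : B ⊆ D := Finset.sdiff_subset.trans Finset.sdiff_subset
  obtain ⟨t, ht⟩ := hc.1
  have hAn : A ≠ D := by
    rintro rfl
    have := hA (hT ht)
    simp [ht] at this
  have hBn : B ≠ D := by
    intro h
    have : t ∈ B := by rw [h]; exact hT ht
    simp [hB, ht] at this
  have h1 := hD.cr_ge hAD hne hAn
  have h2 := hD.cr_ge hBD hBne hBn
  have hAB : cr H A B = 0 := by
    by_contra h
    obtain ⟨p, hp, q, hq, hh⟩ := cr_pos.1 (Nat.pos_of_ne_zero h)
    rw [hB, Finset.mem_sdiff] at hq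
    exact hcon p hp q hq.1 hq.2 hh
  have e1 : D \ A = T ∪ B := by
    ext c; have := @hA c; have := @hT c; grind
  have e2 : D \ B = T ∪ A := by
    ext c; have := @hA c; have := @hT c; grind
  have e3 : D \ T = A ∪ B := by
    ext c; have := @hA c; grind
  have d1 : Disjoint T B := by
    rw [Finset.disjoint_left]; grind
  have d2 : Disjoint T A := by
    rw [Finset.disjoint_left]; intro c hc1 hc2; have := hA hc2; grind
  have d3 : Disjoint A B := Finset.disjoint_sdiff
  rw [e1, cr_union_right H d1, hAB, cr_comm] at h1
  rw [e2, cr_union_right H d2, cr_comm H B A, hAB, cr_comm] at h2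
  have h3 := hD.cr_le hT hc
  rw [e3, cr_union_right H d3] at h3
  omega

lemma Cy.two {V : Type} {H : SimpleGraph V} {D : Finset V} (hD : Cy H D) {v q z n : V}
    (hv : v ∈ D) (hq : q ∈ D) (hz : z ∈ D) (hn : n ∈ D) (hqz : q ≠ z) (aq : H.Adj v q)
    (az : H.Adj v z) (an : H.Adj v n) : n = q ∨ n = z := by
  by_contra h
  push Not at h
  have h1 := hD.2 v hv
  have h2 : ({q, z, n} : Finset V) ⊆ D.filter (fun u => H.Adj v u) := by
    intro c hc
    simp only [Finset.mem_insert, Finset.mem_singleton] at hc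
    rcases hc with rfl | rfl | rfl <;> simp [*]
  have h3 := Finset.card_le_card h2
  rw [Finset.card_eq_three.2 ⟨q, z, n, hqz, h.1.symm, h.2.symm, rfl⟩] at h3
  unfold nb at h1
  omega

lemma Cy.other {V : Type} {H : SimpleGraph V} {D : Finset V} (hD : Cy H D) {v : V} (q : V)
    (hv : v ∈ D) : ∃ z ∈ D, z ≠ q ∧ H.Adj v z := by
  have h1 := hD.2 v hv
  obtain ⟨z, hz, hzq⟩ := Finset.exists_mem_ne (s := D.filter (fun u => H.Adj v u))
    (by unfold nb at h1; omega) q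
  simp only [Finset.mem_filter] at hz
  exact ⟨z, hz.1, hzq, hz.2⟩

lemma Cy.swap {V : Type} {H : SimpleGraph V} {D E : Finset V} (hD : Cy H D) (hE : Cy H E)
    {p r : V} (hpD : p ∈ D) (hpE : p ∈ E) (hr : r ∈ D) (hr' : r ∉ E) (h : H.Adj p r) :
    ∃ r ∈ E \ D, H.Adj p r := by
  by_contra hcon
  push Not at hcon
  obtain ⟨a, ha, har, hpa⟩ := hE.other r hpE
  obtain ⟨b, hb, hba, hpb⟩ := hE.other a hpE
  have haD : a ∈ D := by
    by_contra h'; exact hcon a (by simp [ha, h']) hpa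
  have hbD : b ∈ D := by
    by_contra h'; exact hcon b (by simp [hb, h']) hpb
  rcases hD.two hpD haD hbD hr hba.symm hpa hpb h with h1 | h1
  · exact hr' (h1 ▸ ha)
  · exact hr' (h1 ▸ hb)

lemma Cy.arc {V : Type} {H : SimpleGraph V} {D Z K : Finset V} (hD : Cy H D) {v q z : V}
    (hv : v ∈ D) (hZ : Z ⊆ D) (hvZ : v ∉ Z) (hK : Cp H Z K) (hqK : q ∈ K) (aq : H.Adj v q)
    (hz : z ∈ D) (az : H.Adj v z) (hzK : z ∉ K) :
    ∃ p ∈ K, ∃ r ∈ D, r ∉ Z ∧ r ≠ v ∧ H.Adj p r := by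
  have hKD : K ⊆ D := hK.1.trans hZ
  have hvK : v ∉ K := fun h => hvZ (hK.1 h)
  have h1 := hD.cr_ge hKD ⟨q, hqK⟩ (fun h => hvK (h ▸ hv))
  have e1 : D \ K = {v} ∪ ((D \ K) \ {v}) := by
    ext c; by_cases hc : c = v
    · subst hc; simp [hv, hvK]
    · simp [hc]
  have h2 : cr H K {v} ≤ 1 := by
    rw [cr_comm]
    simp only [cr, Finset.sum_singleton, nb]
    rw [Finset.card_le_one]
    intro c hc d hd
    simp only [Finset.mem_filter] at hc hd
    have hqz : q ≠ z := fun h => hzK (h ▸ hqK)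
    have h3 := hD.two hv (hKD hqK) hz (hKD hc.1) hqz aq az hc.2
    have h4 := hD.two hv (hKD hqK) hz (hKD hd.1) hqz aq az hd.2
    grind
  rw [e1, cr_union_right H Finset.disjoint_sdiff] at h1
  obtain ⟨p, hp, r, hr, hh⟩ := cr_pos.1 (show 0 < cr H K ((D \ K) \ {v}) by omega)
  simp only [Finset.mem_sdiff, Finset.mem_singleton] at hr
  exact ⟨p, hp, r, hr.1.1, fun h => hr.1.2 (hK.2.2 p hp r h hh), hr.2, hh⟩

lemma Cy.sep {V : Type} {H : SimpleGraph V} {D Z K : Finset V} (hD : Cy H D) {v q z r : V}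
    (hv : v ∈ D) (hZ : Z ⊆ D) (hvZ : v ∉ Z) (hK : Cp H Z K) (hqK : q ∈ K) (aq : H.Adj v q)
    (az : H.Adj v z) (hqz : q ≠ z) (hr : r ∈ D) (hrZ : r ∉ Z) (hrv : r ≠ v) : z ∉ K := by
  intro hzK
  have hKD : K ⊆ D := hK.1.trans hZ
  have hvK : v ∉ K := fun h => hvZ (hK.1 h)
  have h1 := hD.cr_le hKD hK.2.1
  have e1 : D \ K = {v} ∪ ((D \ K) \ {v}) := by
    ext c; by_cases hc : c = v
    · subst hc; simp [hv, hvK]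
    · simp [hc]
  have h2 : 2 ≤ cr H K {v} := by
    rw [cr_comm]
    simp only [cr, Finset.sum_singleton, nb]
    have : ({q, z} : Finset V) ⊆ K.filter (fun u => H.Adj v u) := by
      intro c hc
      simp only [Finset.mem_insert, Finset.mem_singleton] at hc
      rcases hc with rfl | rfl <;> simp [*]
    have h3 := Finset.card_le_card this
    rwa [Finset.card_pair hqz] at h3
  rw [e1, cr_union_right H Finset.disjoint_sdiff] at h1
  obtain ⟨p, hp, c, hc, hc', hh⟩ := hD.1.2 (insert v K) (Finset.insert_subset hv hKD)
    ⟨v, by simp⟩ (by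
      intro h
      rw [← h, Finset.mem_insert] at hr
      exact hr.elim hrv (fun h' => hrZ (hK.1 h')))
  simp only [Finset.mem_insert, not_or] at hc' hp
  rcases hp with rfl | hp
  · rcases hD.two hv (hKD hqK) (hKD hzK) hc hqz aq az hh with h | h
    · exact hc'.2 (h ▸ hqK)
    · exact hc'.2 (h ▸ hzK)
  · have := cr_pos.2 (show At H K ((D \ K) \ {v}) from ⟨p, hp, c, by simp [hc, hc'], hh⟩)
    omega

lemma K33_of {V : Type} {H : SimpleGraph V} {A B C X Y Z : Finset V}
    (cA : Cn H A) (cB : Cn H B) (cC : Cn H C) (cX : Cn H X) (cY : Cn H Y) (cZ : Cn H Z)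
    (AB : Disjoint A B) (AC : Disjoint A C) (BC : Disjoint B C)
    (XY : Disjoint X Y) (XZ : Disjoint X Z) (YZ : Disjoint Y Z)
    (AX : Disjoint A X) (AY : Disjoint A Y) (AZ : Disjoint A Z)
    (BX : Disjoint B X) (BY : Disjoint B Y) (BZ : Disjoint B Z)
    (CX : Disjoint C X) (CY : Disjoint C Y) (CZ : Disjoint C Z)
    (aAX : At H A X) (aAY : At H A Y) (aAZ : At H A Z)
    (aBX : At H B X) (aBY : At H B Y) (aBZ : At H B Z)
    (aCX : At H C X) (aCY : At H C Y) (aCZ : At H C Z) :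
    Mn (completeBipartiteGraph (Fin 3) (Fin 3)) H := by
  refine ⟨Sum.elim ![A, B, C] ![X, Y, Z], ?_, ?_, ?_⟩
  · rintro (i | i) <;> fin_cases i <;> assumption
  · rintro (i | i) (j | j) hij <;> fin_cases i <;> fin_cases j <;>
      first | exact absurd rfl hij | assumption | (refine Disjoint.symm ?_; assumption)
  · rintro (i | i) (j | j) hij
    · simp at hij
    · fin_cases i <;> fin_cases j <;> assumption
    · fin_cases i <;> fin_cases j <;> (refine At.symm ?_; assumption)
    · simp at hij

lemma K5_of {V : Type} {H : SimpleGraph V} {A B X Y Z : Finset V}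
    (cA : Cn H A) (cB : Cn H B) (cX : Cn H X) (cY : Cn H Y) (cZ : Cn H Z)
    (AB : Disjoint A B)
    (XY : Disjoint X Y) (XZ : Disjoint X Z) (YZ : Disjoint Y Z)
    (AX : Disjoint A X) (AY : Disjoint A Y) (AZ : Disjoint A Z)
    (BX : Disjoint B X) (BY : Disjoint B Y) (BZ : Disjoint B Z)
    (aAB : At H A B) (aXY : At H X Y) (aXZ : At H X Z) (aYZ : At H Y Z)
    (aAX : At H A X) (aAY : At H A Y) (aAZ : At H A Z)
    (aBX : At H B X) (aBY : At H B Y) (aBZ : At H B Z) :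
    Mn (completeGraph (Fin 5)) H := by
  refine ⟨![A, B, X, Y, Z], ?_, ?_, ?_⟩
  · intro i; fin_cases i <;> assumption
  · intro i j hij; fin_cases i <;> fin_cases j <;>
      first | exact absurd rfl hij | assumption | (refine Disjoint.symm ?_; assumption)
  · intro i j hij; fin_cases i <;> fin_cases j <;>
      first | exact absurd hij (SimpleGraph.irrefl _) | assumption | (refine At.symm ?_; assumption)

/-- A component off two peripheral cycles touches both private arcs. -/
lemma bridge {V : Type} {H : SimpleGraph V} {S D E K : Finset V} (hE : E ⊆ S)
    (hD : Cn H (S \ D)) (hne : (E \ D).Nonempty) (hK : Cp H (S \ (D ∪ E)) K) : At H K (E \ D) := by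
  obtain ⟨r, hr⟩ := hne
  rw [Finset.mem_sdiff] at hr
  obtain ⟨p, hp, q, hq, hq', hh⟩ := hD.2 K (hK.1.trans (by intro c; simp; tauto)) hK.2.1.1
    (by rintro rfl
        have := hK.1 (show r ∈ S \ D by simp [hE hr.1, hr.2])
        simp [hr.1] at this)
  rw [Finset.mem_sdiff] at hq
  refine ⟨p, hp, q, ?_, hh⟩
  by_contra h
  exact hq' (hK.2.2 p hp q (by simp at h ⊢; tauto) hh)

/-- First half of the three-cycle lemma. -/
lemma sub_third {V : Type} {H : SimpleGraph V} {S D1 D2 D3 : Finset V} {x y : V}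
    (hS1 : D1 ⊆ S) (hS2 : D2 ⊆ S) (hS3 : D3 ⊆ S)
    (h1 : Cy H D1) (h2 : Cy H D2) (h3 : Cy H D3)
    (p1 : Cn H (S \ D1)) (p2 : Cn H (S \ D2))
    (c12 : Cn H (D1 \ D2)) (c21 : Cn H (D2 \ D1))
    (hx1 : x ∈ D1) (hx2 : x ∈ D2) (hx3 : x ∈ D3) (hy1 : y ∈ D1) (hy2 : y ∈ D2) (hy3 : y ∈ D3)
    (hxy : H.Adj x y) (hno : ¬ Mn (completeBipartiteGraph (Fin 3) (Fin 3)) H) :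
    D1 ∩ D2 ⊆ D3 := by
  by_contra hcon
  have hA : Cn H (D1 ∩ D2) := by
    have := h1.compl Finset.sdiff_subset c12 (by
      intro h; rw [← h] at hx1; simp [hx2] at hx1)
    rwa [Finset.sdiff_sdiff_self_left] at this
  obtain ⟨T, hT, hxT⟩ := exists_Cp H (D1 ∩ D2 ∩ D3) x (by simp [*])
  have hyT : y ∈ T := hT.2.2 x hxT y (by simp [*]) hxy
  have hTA : T ⊆ D1 ∩ D2 := hT.1.trans Finset.inter_subset_left
  obtain ⟨s, hs, z, hz, hzT, asz⟩ := hA.2 T hTA ⟨x, hxT⟩ (by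
    rintro rfl
    exact hcon (hT.1.trans Finset.inter_subset_right))
  have hz3 : z ∉ D3 := fun h => hzT (hT.2.2 s hs z (by simp_all) asz)
  obtain ⟨q, hq, asq⟩ : ∃ q ∈ T, H.Adj s q := by
    obtain ⟨p, hp, q, hq, hq', hh⟩ := hT.2.1.2 {s} (by simpa using hs) (by simp) (by
      rintro h
      rw [← h] at hxT hyT
      simp at hxT hyT
      rw [hxT, hyT] at hxy
      exact H.irrefl hxy)
    simp at hp
    exact ⟨q, hq, hp ▸ hh⟩
  have hs' := hT.1 hs
  have hq1 := hT.1 hq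
  simp only [Finset.mem_inter] at hs' hq1 hz
  obtain ⟨⟨hs1, hs2⟩, hs3⟩ := hs'
  obtain ⟨⟨hq1, hq2⟩, hq3⟩ := hq1
  obtain ⟨hz1, hz2⟩ := hz
  have hqz : q ≠ z := fun h => hz3 (h ▸ hq3)
  obtain ⟨n, hn3, hnq, asn⟩ := h3.other q hs3
  have hnz : n ≠ z := fun h => hz3 (h ▸ hn3)
  have hn1 : n ∉ D1 := fun h => (h1.two hs1 hq1 hz1 h hqz asq asz asn).elim hnq hnz
  have hn2 : n ∉ D2 := fun h => (h2.two hs2 hq2 hz2 h hqz asq asz asn).elim hnq hnz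
  obtain ⟨K, hK, hnK⟩ := exists_Cp H (S \ (D1 ∪ D2)) n (by simp [hS3 hn3, hn1, hn2])
  have kx2 := bridge hS2 p1 c21.1 hK
  have kx1 := bridge hS1 p2 c12.1 (by rwa [Finset.union_comm] at hK)
  set Z := (D1 ∩ D2).erase s with hZ
  obtain ⟨L, hL, hqL⟩ := exists_Cp H Z q (by simp [hZ, hq1, hq2, asq.ne'])
  obtain ⟨M, hM, hzM⟩ := exists_Cp H Z z (by simp [hZ, hz1, hz2, asz.ne'])
  have hZD : Z ⊆ D1 := (Finset.erase_subset _ _).trans Finset.inter_subset_left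
  have hsZ : s ∉ Z := by simp [hZ]
  obtain ⟨r, hr⟩ := c12.1
  rw [Finset.mem_sdiff] at hr
  have hrZ : r ∉ Z := by simp [hZ, hr]
  have hrs : r ≠ s := fun h => hr.2 (h ▸ hs2)
  have hzL : z ∉ L := h1.sep hs1 hZD hsZ hL hqL asq asz hqz hr.1 hrZ hrs
  have hqM : q ∉ M := h1.sep hs1 hZD hsZ hM hzM asz asq hqz.symm hr.1 hrZ hrs
  obtain ⟨l, hl, l', hl', hlZ, hls, all⟩ := h1.arc hs1 hZD hsZ hL hqL asq hz1 asz hzL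
  obtain ⟨k, hk, k', hk', hkZ, hks, akk⟩ := h1.arc hs1 hZD hsZ hM hzM asz hq1 asq hqM
  have hl2 : l' ∉ D2 := fun h => hlZ (by simp [hZ, hl', h, hls])
  have hk2 : k' ∉ D2 := fun h => hkZ (by simp [hZ, hk', h, hks])
  have hlm := hL.1 hl
  have hkm := hM.1 hk
  simp only [hZ, Finset.mem_erase, Finset.mem_inter] at hlm hkm
  obtain ⟨l2, hl2', al2⟩ := h1.swap h2 hlm.2.1 hlm.2.2 hl' hl2 all
  obtain ⟨k2, hk2', ak2⟩ := h1.swap h2 hkm.2.1 hkm.2.2 hk' hk2 akk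
  have LM : Disjoint L M := by
    rw [Finset.disjoint_left]
    intro c hc hc'
    exact hzL ((hL.eq_of_mem hM hc hc') ▸ hzM)
  have LA : ∀ c ∈ L, c ∈ D1 ∧ c ∈ D2 ∧ c ≠ s := by
    intro c hc; have := hL.1 hc; simp [hZ] at this; tauto
  have MA : ∀ c ∈ M, c ∈ D1 ∧ c ∈ D2 ∧ c ≠ s := by
    intro c hc; have := hM.1 hc; simp [hZ] at this; tauto
  have KA : ∀ c ∈ K, c ∉ D1 ∧ c ∉ D2 := by
    intro c hc; have := hK.1 hc; simp at this; tauto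
  refine hno (K33_of hL.2.1 hM.2.1 hK.2.1 (Cn.singleton H s) c12 c21 LM
    ?_ ?_ ?_ ?_ ?_ ?_ ?_ ?_ ?_ ?_ ?_ ?_ ?_ ?_
    ⟨q, hqL, s, by simp, asq.symm⟩ ⟨l, hl, l', by simp [hl', hl2], all⟩ ⟨l, hl, l2, hl2', al2⟩
    ⟨z, hzM, s, by simp, asz.symm⟩ ⟨k, hk, k', by simp [hk', hk2], akk⟩ ⟨k, hk, k2, hk2', ak2⟩
    ⟨n, hnK, s, by simp, asn.symm⟩ kx1 kx2) <;> 
  · rw [Finset.disjoint_left]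
    intro c hc hc'
    grind

/-- Two private arcs are joined directly or through a component. -/
lemma link {V : Type} {H : SimpleGraph V} {X Y R : Finset V} (h : Cn H (X ∪ Y ∪ R))
    (hX : X.Nonempty) (hY : Y.Nonempty) (XY : Disjoint X Y) (YR : Disjoint Y R) :
    ∃ K, (K = ∅ ∧ At H X Y) ∨ (Cp H R K ∧ At H K X ∧ At H K Y) := by
  set T := X ∪ R.filter (fun r => ∃ K, Cp H R K ∧ r ∈ K ∧ At H K X) with hT
  obtain ⟨u, hu⟩ := hY
  obtain ⟨t, ht, r, hr, hrT, hh⟩ := h.2 T (by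
      intro c; simp only [hT, Finset.mem_union, Finset.mem_filter]; tauto)
    (hX.mono Finset.subset_union_left) (by
      intro h
      have : u ∈ T := by rw [h]; simp [hu]
      simp only [hT, Finset.mem_union, Finset.mem_filter] at this
      rcases this with h | h
      · exact Finset.disjoint_left.1 XY h hu
      · exact Finset.disjoint_left.1 YR hu h.1)
  simp only [hT, Finset.mem_union, Finset.mem_filter, not_or] at ht hr hrT
  rcases hr with (hr | hr) | hr
  · exact absurd hr hrT.1
  · rcases ht with ht | ⟨ht, K, hK, htK, hKX⟩
    · exact ⟨∅, Or.inl ⟨rfl, t, ht, r, hr, hh⟩⟩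
    · exact ⟨K, Or.inr ⟨hK, hKX, t, htK, r, hr, hh⟩⟩
  · exfalso
    rcases ht with ht | ⟨ht, K, hK, htK, hKX⟩
    · obtain ⟨K, hK, hrK⟩ := exists_Cp H R r hr
      exact hrT.2 ⟨hr, K, hK, hrK, r, hrK, t, ht, hh.symm⟩
    · exact hrT.2 ⟨hr, K, hK, hK.2.2 t htK r hr hh, hKX⟩

lemma link_Cn {V : Type} {H : SimpleGraph V} {X Y R K : Finset V} (hX : Cn H X)
    (h : (K = ∅ ∧ At H X Y) ∨ (Cp H R K ∧ At H K X ∧ At H K Y)) :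
    Cn H (X ∪ K) ∧ At H (X ∪ K) Y ∧ K ⊆ R := by
  rcases h with ⟨rfl, h⟩ | ⟨h1, h2, h3⟩
  · simp [hX, h]
  · exact ⟨hX.union h1.2.1 h2.symm, h3.mono Finset.subset_union_right subset_rfl, h1.1⟩

lemma link_disj {V : Type} {H : SimpleGraph V} {X Y Z R K L : Finset V}
    (hno : ∀ K, Cp H R K → At H K X → At H K Y → At H K Z → False)
    (h : (K = ∅ ∧ At H X Y) ∨ (Cp H R K ∧ At H K X ∧ At H K Y))
    (h' : (L = ∅ ∧ At H Y Z) ∨ (Cp H R L ∧ At H L Y ∧ At H L Z)) : Disjoint K L := by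
  rcases h with ⟨rfl, h⟩ | ⟨h1, h2, h3⟩
  · simp
  rcases h' with ⟨rfl, h'⟩ | ⟨h1', h2', h3'⟩
  · simp
  rw [Finset.disjoint_left]
  intro c hc hc'
  have := h1.eq_of_mem h1' hc hc'
  subst this
  exact hno K h1 h2 h3 h3'

set_option maxHeartbeats 1000000 in
/-- The three-cycle lemma. -/
lemma three_cycles {V : Type} {H : SimpleGraph V} {S D1 D2 D3 : Finset V} {x y : V}
    (hS1 : D1 ⊆ S) (hS2 : D2 ⊆ S) (hS3 : D3 ⊆ S)
    (h1 : Cy H D1) (h2 : Cy H D2) (h3 : Cy H D3)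
    (p1 : Cn H (S \ D1)) (p2 : Cn H (S \ D2)) (p3 : Cn H (S \ D3))
    (c12 : Cn H (D1 \ D2)) (c21 : Cn H (D2 \ D1))
    (c13 : Cn H (D1 \ D3)) (c31 : Cn H (D3 \ D1))
    (c23 : Cn H (D2 \ D3)) (c32 : Cn H (D3 \ D2))
    (hx1 : x ∈ D1) (hx2 : x ∈ D2) (hx3 : x ∈ D3) (hy1 : y ∈ D1) (hy2 : y ∈ D2) (hy3 : y ∈ D3)
    (hxy : H.Adj x y) (hno : ¬ Mn (completeBipartiteGraph (Fin 3) (Fin 3)) H)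
    (hno5 : ¬ Mn (completeGraph (Fin 5)) H) : False := by
  have s12 := sub_third hS1 hS2 hS3 h1 h2 h3 p1 p2 c12 c21 hx1 hx2 hx3 hy1 hy2 hy3 hxy hno
  have s13 := sub_third hS1 hS3 hS2 h1 h3 h2 p1 p3 c13 c31 hx1 hx3 hx2 hy1 hy3 hy2 hxy hno
  have s23 := sub_third hS2 hS3 hS1 h2 h3 h1 p2 p3 c23 c32 hx2 hx3 hx1 hy2 hy3 hy1 hxy hno
  have s12' : ∀ c, c ∈ D1 → c ∈ D2 → c ∈ D3 := fun c a b => s12 (by simp [a, b])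
  have s13' : ∀ c, c ∈ D1 → c ∈ D3 → c ∈ D2 := fun c a b => s13 (by simp [a, b])
  have s23' : ∀ c, c ∈ D2 → c ∈ D3 → c ∈ D1 := fun c a b => s23 (by simp [a, b])
  have hA : Cn H (D1 ∩ D2) := by
    have := h1.compl Finset.sdiff_subset c12 (by
      intro h; rw [← h] at hx1; simp [hx2] at hx1)
    rwa [Finset.sdiff_sdiff_self_left] at this
  obtain ⟨v, hv, w, hw, hwA, avw⟩ := h1.1.2 (D1 ∩ D2) Finset.inter_subset_left ⟨x, by simp [*]⟩
    (by intro h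
        obtain ⟨r, hr⟩ := c12.1
        rw [Finset.mem_sdiff] at hr
        rw [← h] at hr
        exact hr.2 (Finset.mem_inter.1 hr.1).2)
  simp only [Finset.mem_inter, not_and] at hv hwA
  obtain ⟨hv1, hv2⟩ := hv
  have hw2 := hwA hw
  have hv3 := s12' v hv1 hv2
  obtain ⟨q, hq, avq⟩ : ∃ q ∈ D1 ∩ D2, H.Adj v q := by
    obtain ⟨p, hp, q, hq, hq', hh⟩ := hA.2 {v} (by simp [hv1, hv2]) (by simp) (by
      rintro h
      have hxT : x ∈ D1 ∩ D2 := by simp [*]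
      have hyT : y ∈ D1 ∩ D2 := by simp [*]
      rw [← h] at hxT hyT
      simp at hxT hyT
      rw [hxT, hyT] at hxy
      exact H.irrefl hxy)
    simp at hp
    exact ⟨q, hq, hp ▸ hh⟩
  simp only [Finset.mem_inter] at hq
  set Z := (D1 ∩ D2).erase v with hZ
  obtain ⟨U, hU, hqU⟩ := exists_Cp H Z q (by simp [hZ, hq, avq.ne'])
  have hZD : Z ⊆ D1 := (Finset.erase_subset _ _).trans Finset.inter_subset_left
  have hvZ : v ∉ Z := by simp [hZ]
  have UA : ∀ c ∈ U, c ∈ D1 ∧ c ∈ D2 ∧ c ∈ D3 ∧ c ≠ v := by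
    intro c hc; have := hU.1 hc; simp [hZ] at this
    exact ⟨this.2.1, this.2.2, s12' c this.2.1 this.2.2, this.1⟩
  obtain ⟨u, hu, u', hu', huZ, huv, auu⟩ := h1.arc hv1 hZD hvZ hU hqU avq hw avw
    (fun h => hw2 (UA w h).2.1)
  have hu2 : u' ∉ D2 := fun h => huZ (by simp [hZ, hu', h, huv])
  have hum := UA u hu
  have hw3 : w ∉ D3 := fun h => hw2 (s13' w hw h)
  have hu3 : u' ∉ D3 := fun h => hu2 (s13' u' hu' h)
  obtain ⟨u2, hu2', au2⟩ := h1.swap h2 hum.1 hum.2.1 hu' hu2 auu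
  obtain ⟨u3, hu3', au3⟩ := h1.swap h3 hum.1 hum.2.2.1 hu' hu3 auu
  obtain ⟨v2, hv2', av2⟩ := h1.swap h2 hv1 hv2 hw hw2 avw
  obtain ⟨v3, hv3', av3⟩ := h1.swap h3 hv1 hv3 hw hw3 avw
  set X1 := D1 \ D2 with hX1
  set X2 := D2 \ D1 with hX2
  set X3 := D3 \ D1 with hX3
  set R := S \ (D1 ∪ D2 ∪ D3) with hR
  have UX1 : At H U X1 := ⟨u, hu, u', by simp [hX1, hu', hu2], auu⟩
  have UX2 : At H U X2 := ⟨u, hu, u2, hu2', au2⟩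
  have UX3 : At H U X3 := ⟨u, hu, u3, hu3', au3⟩
  have vX1 : At H {v} X1 := ⟨v, by simp, w, by simp [hX1, hw, hw2], avw⟩
  have vX2 : At H {v} X2 := ⟨v, by simp, v2, hv2', av2⟩
  have vX3 : At H {v} X3 := ⟨v, by simp, v3, hv3', av3⟩
  have Uv : At H U {v} := ⟨q, hqU, v, by simp, avq.symm⟩
  have dUv : Disjoint U {v} := by rw [Finset.disjoint_left]; grind
  have d12 : Disjoint X1 X2 := by rw [Finset.disjoint_left]; grind
  have d13 : Disjoint X1 X3 := by rw [Finset.disjoint_left]; grind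
  have d23 : Disjoint X2 X3 := by rw [Finset.disjoint_left]; grind
  have e3 : S \ D3 = X1 ∪ X2 ∪ R := by
    ext c; have := @hS1 c; have := @hS2 c; have := s12' c; have := s13' c; have := s23' c; grind
  have e1 : S \ D1 = X2 ∪ X3 ∪ R := by
    ext c; have := @hS3 c; have := @hS2 c; have := s12' c; have := s13' c; have := s23' c; grind
  have e2 : S \ D2 = X3 ∪ X1 ∪ R := by
    ext c; have := @hS3 c; have := @hS1 c; have := s12' c; have := s13' c; have := s23' c; grind
  have r1 : Disjoint X1 R := by rw [Finset.disjoint_left]; grind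
  have r2 : Disjoint X2 R := by rw [Finset.disjoint_left]; grind
  have r3 : Disjoint X3 R := by rw [Finset.disjoint_left]; grind
  have hno' : ∀ K, Cp H R K → At H K X1 → At H K X2 → At H K X3 → False := by
    intro K hK k1 k2 k3
    have KA : ∀ c ∈ K, c ∉ D1 ∧ c ∉ D2 ∧ c ∉ D3 := by
      intro c hc; have := hK.1 hc; simp [hR] at this; tauto
    refine hno (K33_of hU.2.1 (Cn.singleton H v) hK.2.1 c12 c21 c31 dUv ?_ ?_ d12 d13 d23
      ?_ ?_ ?_ ?_ ?_ ?_ ?_ ?_ ?_ UX1 UX2 UX3 vX1 vX2 vX3 k1 k2 k3) <;>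
    · rw [Finset.disjoint_left]
      intro c hc hc'
      grind
  rw [e1] at p1
  rw [e2] at p2
  rw [e3] at p3
  obtain ⟨K, hK⟩ := link p3 c12.1 c21.1 d12 r2
  obtain ⟨L, hL⟩ := link p1 c21.1 c31.1 d23 r3
  obtain ⟨M, hM⟩ := link p2 c31.1 c12.1 d13.symm r1
  have dKL := link_disj hno' hK hL
  have dLM := link_disj (fun K a b c d => hno' K a d b c) hL hM
  have dMK := link_disj (fun K a b c d => hno' K a c d b) hM hK
  obtain ⟨K1, K2, K3⟩ := link_Cn c12 hK
  obtain ⟨L1, L2, L3⟩ := link_Cn c21 hL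
  obtain ⟨M1, M2, M3⟩ := link_Cn c31 hM
  have RA : ∀ c ∈ R, c ∉ D1 ∧ c ∉ D2 ∧ c ∉ D3 := by
    intro c hc; simp [hR] at hc; tauto
  have KA := fun c hc => RA c (K3 hc)
  have LA := fun c hc => RA c (L3 hc)
  have MA := fun c hc => RA c (M3 hc)
  have X1A : ∀ c ∈ X1, c ∈ D1 ∧ c ∉ D2 ∧ c ∉ D3 := by grind
  have X2A : ∀ c ∈ X2, c ∈ D2 ∧ c ∉ D1 ∧ c ∉ D3 := by grind
  have X3A : ∀ c ∈ X3, c ∈ D3 ∧ c ∉ D1 ∧ c ∉ D2 := by grind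
  rw [Finset.disjoint_left] at dKL dLM dMK
  clear_value X1 X2 X3 R
  refine hno5 (K5_of hU.2.1 (Cn.singleton H v) K1 L1 M1 dUv
    ?_ ?_ ?_ ?_ ?_ ?_ ?_ ?_ ?_
    Uv (K2.mono subset_rfl Finset.subset_union_left)
    (M2.mono subset_rfl Finset.subset_union_left).symm
    (L2.mono subset_rfl Finset.subset_union_left)
    (UX1.mono subset_rfl Finset.subset_union_left) (UX2.mono subset_rfl Finset.subset_union_left)
    (UX3.mono subset_rfl Finset.subset_union_left) (vX1.mono subset_rfl Finset.subset_union_left)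
    (vX2.mono subset_rfl Finset.subset_union_left)
    (vX3.mono subset_rfl Finset.subset_union_left)) <;>
  · rw [Finset.disjoint_left]
    intro c hc hc'
    simp only [Finset.mem_union, Finset.mem_singleton] at hc hc'
    grind

lemma exists_ker {ι κ K : Type} [Field K] (E : Finset ι) (T : Finset κ) (M : ι → κ → K)
    (h : T.card < E.card) :
    ∃ J : ι → K, (∃ e ∈ E, J e ≠ 0) ∧ ∀ t ∈ T, ∑ e ∈ E, J e * M e t = 0 := by
  let f : (E → K) →ₗ[K] (T → K) :=
    { toFun := fun J t => ∑ e : E, J e * M e t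
      map_add' := by
        intro J J'; ext t; simp [add_mul, Finset.sum_add_distrib]
      map_smul' := by
        intro c J; ext t; simp [Finset.mul_sum, mul_assoc] }
  have hk : LinearMap.ker f ≠ ⊥ := LinearMap.ker_ne_bot_of_finrank_lt (by simpa using h)
  obtain ⟨J, hJ, hJ0⟩ := (Submodule.ne_bot_iff _).1 hk
  obtain ⟨e, he⟩ := Function.ne_iff.1 hJ0
  refine ⟨fun e => if h : e ∈ E then J ⟨e, h⟩ else 0, ⟨e, e.2, by simpa using he⟩, fun t ht => ?_⟩
  have h1 : f J ⟨t, ht⟩ = 0 := by rw [LinearMap.mem_ker.1 hJ]; rfl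
  rw [← Finset.sum_coe_sort]
  simpa [f] using h1

/-- Incidence number. -/
noncomputable def iz {V ι : Type} (a b : ι → V) (e : ι) (v : V) : ℕ :=
  (if a e = v then 1 else 0) + (if b e = v then 1 else 0)

/-- Degree of `v` in the edge set `F`. -/
noncomputable def dg {V ι : Type} (a b : ι → V) (F : Finset ι) (v : V) : ℕ := ∑ e ∈ F, iz a b e v

/-- Boundary mod 2. -/
noncomputable def bd {V ι : Type} (a b : ι → V) (F : Finset ι) (v : V) : ZMod 2 :=
  ∑ e ∈ F, (iz a b e v : ZMod 2)

/-- Even edge sets. -/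
def Ev {V ι : Type} (a b : ι → V) (F : Finset ι) : Prop := ∀ v, bd a b F v = 0

/-- Vertices of an edge set. -/
noncomputable def vs {V ι : Type} (a b : ι → V) (F : Finset ι) : Finset V := F.image a ∪ F.image b

/-- The simple graph of an edge set. -/
def gr {V ι : Type} (a b : ι → V) (E : Finset ι) : SimpleGraph V where
  Adj p q := p ≠ q ∧ ∃ e ∈ E, (a e = p ∧ b e = q) ∨ (a e = q ∧ b e = p)
  symm := ⟨by
    rintro p q ⟨h, e, he, h'⟩
    exact ⟨h.symm, e, he, h'.symm⟩⟩
  loopless := ⟨fun p h => h.1 rfl⟩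

lemma bd_eq_dg {V ι : Type} (a b : ι → V) (F : Finset ι) (v : V) :
    bd a b F v = (dg a b F v : ZMod 2) := by
  simp [bd, dg]

lemma mem_vs {V ι : Type} {a b : ι → V} {F : Finset ι} {v : V} :
    v ∈ vs a b F ↔ ∃ e ∈ F, a e = v ∨ b e = v := by
  simp only [vs, Finset.mem_union, Finset.mem_image]
  grind

lemma iz_eq_zero {V ι : Type} {a b : ι → V} {e : ι} {v : V} (h1 : a e ≠ v) (h2 : b e ≠ v) :
    iz a b e v = 0 := by simp [iz, h1, h2]

lemma iz_sum {V ι : Type} {a b : ι → V} {e : ι} {S : Finset V} (h1 : a e ∈ S) (h2 : b e ∈ S) :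
    ∑ v ∈ S, iz a b e v = 2 := by
  simp [iz, Finset.sum_add_distrib, h1, h2]

lemma dg_sum {V ι : Type} {a b : ι → V} {F : Finset ι} {S : Finset V}
    (h : ∀ e ∈ F, a e ∈ S ∧ b e ∈ S) : ∑ v ∈ S, dg a b F v = 2 * F.card := by
  unfold dg
  rw [Finset.sum_comm, Finset.sum_congr rfl (fun e he => iz_sum (h e he).1 (h e he).2)]
  simp [mul_comm]

lemma bd_sum {V ι : Type} {a b : ι → V} {F : Finset ι} {S : Finset V}
    (h : ∀ e ∈ F, a e ∈ S ∧ b e ∈ S) : ∑ v ∈ S, bd a b F v = 0 := by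
  simp only [bd_eq_dg]
  rw [← Nat.cast_sum, dg_sum h]
  push_cast
  rw [show (2 : ZMod 2) = 0 from rfl, zero_mul]

lemma bd_union {V ι : Type} {a b : ι → V} {F F' : Finset ι} (h : Disjoint F F') (v : V) :
    bd a b (F ∪ F') v = bd a b F v + bd a b F' v := Finset.sum_union h

lemma zmod2_cases (x : ZMod 2) : x = 0 ∨ x = 1 := by
  revert x; decide

lemma bd_filter {V ι : Type} {a b : ι → V} (F : Finset ι) (J : ι → ZMod 2) (v : V) :
    bd a b (F.filter (fun e => J e = 1)) v = ∑ e ∈ F, J e * (iz a b e v : ZMod 2) := by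
  unfold bd
  rw [Finset.sum_filter]
  refine Finset.sum_congr rfl fun e _ => ?_
  rcases zmod2_cases (J e) with h | h <;> simp [h]

/-- Forest bound: many edges force an even set. -/
lemma exists_even {V ι : Type} {a b : ι → V} {E : Finset ι} {S : Finset V}
    (hE : ∀ e ∈ E, a e ∈ S ∧ b e ∈ S) (hne : S.Nonempty) (hc : S.card ≤ E.card) :
    ∃ F ⊆ E, F.Nonempty ∧ Ev a b F := by
  obtain ⟨v0, hv0⟩ := hne
  obtain ⟨J, ⟨e, he, hJe⟩, hJ⟩ := exists_ker E (S.erase v0) (fun e v => (iz a b e v : ZMod 2))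
    (by rw [Finset.card_erase_of_mem hv0]; have := Finset.card_pos.2 ⟨v0, hv0⟩; omega)
  refine ⟨E.filter (fun e => J e = 1), Finset.filter_subset _ _,
    ⟨e, by simp [he, (zmod2_cases (J e)).resolve_left hJe]⟩, ?_⟩
  have h1 : ∀ v ∈ S.erase v0, bd a b (E.filter (fun e => J e = 1)) v = 0 := by
    intro v hv; rw [bd_filter]; exact hJ v hv
  intro v
  by_cases hv : v ∈ S
  · by_cases hvv : v = v0
    · have h2 := bd_sum (a := a) (b := b) (F := E.filter (fun e => J e = 1)) (S := S)
        (fun e he => hE e (Finset.mem_filter.1 he).1)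
      rw [← Finset.add_sum_erase S _ hv0, Finset.sum_eq_zero h1, add_zero] at h2
      rw [hvv]; exact h2
    · exact h1 v (by simp [hv, hvv])
  · refine Finset.sum_eq_zero fun e he => ?_
    have := hE e (Finset.mem_filter.1 he).1
    rw [iz_eq_zero (by grind) (by grind)]; simp

/-- Feasible weights in the open box. -/
structure Feas {V ι : Type} (a b : ι → V) (E : Finset ι) (w : ι → ℝ) : Prop where
  pos : ∀ e ∈ E, 0 < w e
  lt : ∀ e ∈ E, w e < 1 / 2
  ev : ∀ F ⊆ E, F.Nonempty → Ev a b F → 1 ≤ ∑ e ∈ F, w e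

/-- Tight even sets. -/
structure Ti {V ι : Type} (a b : ι → V) (E : Finset ι) (w : ι → ℝ) (C : Finset ι) : Prop where
  sub : C ⊆ E
  ne : C.Nonempty
  ev : Ev a b C
  tight : ∑ e ∈ C, w e = 1

section core
variable {V ι : Type} {a b : ι → V} {E : Finset ι} {w : ι → ℝ}

lemma Ti.min (hw : Feas a b E w) {C F : Finset ι} (hC : Ti a b E w C) (hF : F ⊆ C)
    (hne : F.Nonempty) (hev : Ev a b F) : F = C := by
  by_contra h
  obtain ⟨e, he, heF⟩ := Finset.exists_of_ssubset (hF.ssubset_of_ne h)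
  have h1 := Finset.sum_lt_sum_of_subset hF he heF (hw.pos e (hC.sub he))
    (fun j hj _ => (hw.pos j (hC.sub hj)).le)
  have h2 := hw.ev F (hF.trans hC.sub) hne hev
  rw [hC.tight] at h1
  linarith

lemma ends_vs {C : Finset ι} : ∀ e ∈ C, a e ∈ vs a b C ∧ b e ∈ vs a b C := fun e he =>
  ⟨mem_vs.2 ⟨e, he, Or.inl rfl⟩, mem_vs.2 ⟨e, he, Or.inr rfl⟩⟩

lemma vs_ne {C : Finset ι} (h : C.Nonempty) : (vs a b C).Nonempty := by
  obtain ⟨e, he⟩ := h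
  exact ⟨a e, (ends_vs e he).1⟩

lemma Ti.card_le (hw : Feas a b E w) {C : Finset ι} (hC : Ti a b E w C) :
    C.card ≤ (vs a b C).card := by
  by_contra h
  obtain ⟨f, hf⟩ := hC.ne
  obtain ⟨F, hF, hne, hev⟩ := exists_even (a := a) (b := b) (E := C.erase f) (S := vs a b C)
    (fun e he => ends_vs e (Finset.mem_of_mem_erase he)) (vs_ne hC.ne)
    (by rw [Finset.card_erase_of_mem hf]; omega)
  have := hC.min hw (hF.trans (Finset.erase_subset _ _)) hne hev
  rw [this] at hF
  simpa using hF hf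

lemma Ti.dg_eq (hw : Feas a b E w) {C : Finset ι} (hC : Ti a b E w C) :
    ∀ v ∈ vs a b C, dg a b C v = 2 := by
  have h1 : ∀ v ∈ vs a b C, 2 ≤ dg a b C v := by
    intro v hv
    obtain ⟨e, he, h⟩ := mem_vs.1 hv
    have h2 : 1 ≤ dg a b C v := by
      refine le_trans ?_ (Finset.single_le_sum (f := fun e => iz a b e v) (by simp) he)
      rcases h with h | h <;> simp [iz, h]
    have h3 := hC.ev v
    rw [bd_eq_dg, ZMod.natCast_eq_zero_iff_even] at h3
    obtain ⟨k, hk⟩ := h3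
    omega
  have h2 := dg_sum (a := a) (b := b) (F := C) ends_vs
  have h3 := hC.card_le hw
  have h4 : ∑ v ∈ vs a b C, 2 = ∑ v ∈ vs a b C, dg a b C v := by
    refine le_antisymm (Finset.sum_le_sum h1) ?_
    rw [h2]; simp; omega
  intro v hv
  exact ((Finset.sum_eq_sum_iff_of_le h1).1 h4 v hv).symm

lemma Ti.cross (hw : Feas a b E w) {C : Finset ι} (hC : Ti a b E w C) {T : Finset V}
    (hT : T ⊆ vs a b C) (hne : T.Nonempty) (hn : T ≠ vs a b C) :
    ∃ e ∈ C, (a e ∈ T ∧ b e ∉ T) ∨ (a e ∉ T ∧ b e ∈ T) := by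
  by_contra hcon
  push Not at hcon
  have hF : C.filter (fun e => a e ∈ T) = C := by
    refine hC.min hw (Finset.filter_subset _ _) ?_ ?_
    · obtain ⟨t, ht⟩ := hne
      obtain ⟨e, he, h⟩ := mem_vs.1 (hT ht)
      have := hcon e he
      exact ⟨e, by simp only [Finset.mem_filter]; grind⟩
    · intro v
      by_cases hv : v ∈ T
      · rw [← hC.ev v]
        refine Finset.sum_subset (Finset.filter_subset _ _) fun e he he' => ?_
        simp only [Finset.mem_filter, not_and] at he'
        have := hcon e he
        rw [iz_eq_zero (by grind) (by grind)]; simp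
      · refine Finset.sum_eq_zero fun e he => ?_
        simp only [Finset.mem_filter] at he
        have := hcon e he.1
        rw [iz_eq_zero (by grind) (by grind)]; simp
  refine hn (hT.antisymm fun v hv => ?_)
  obtain ⟨e, he, h⟩ := mem_vs.1 hv
  have h1 := hcon e he
  rw [← hF] at he
  simp only [Finset.mem_filter] at he
  grind

lemma Ti.join1 (hw : Feas a b E w) {C : Finset ι} (hC : Ti a b E w C) {v0 : V}
    (hv0 : v0 ∈ vs a b C) : ∀ v ∈ vs a b C, ∃ J : ι → ZMod 2, ∀ u,
      ∑ e ∈ C, J e * (iz a b e u : ZMod 2) = (if v = u then 1 else 0) + (if v0 = u then 1 else 0) := by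
  set T := (vs a b C).filter (fun v => ∃ J : ι → ZMod 2, ∀ u,
      ∑ e ∈ C, J e * (iz a b e u : ZMod 2) =
        (if v = u then 1 else 0) + (if v0 = u then 1 else 0)) with hT
  suffices h : T = vs a b C by
    intro v hv
    rw [← h] at hv
    exact (Finset.mem_filter.1 hv).2
  by_contra hn
  have h0 : v0 ∈ T := by
    simp only [hT, Finset.mem_filter]
    exact ⟨hv0, 0, fun u => by simpa using (CharTwo.add_self_eq_zero _).symm⟩
  have step : ∀ e ∈ C, ∀ p q, ((a e = p ∧ b e = q) ∨ (a e = q ∧ b e = p)) → p ∈ T → q ∈ T := by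
    intro e he p q hpq hp
    simp only [hT, Finset.mem_filter] at hp ⊢
    obtain ⟨_, J, hJ⟩ := hp
    refine ⟨by have := ends_vs (a := a) (b := b) e he; grind, J + Pi.single e 1, fun u => ?_⟩
    simp only [Pi.add_apply, add_mul, Finset.sum_add_distrib, hJ u]
    rw [Finset.sum_eq_single e (by intro f _ hf; simp [Pi.single_eq_of_ne hf]) (by simp [he])]
    simp only [Pi.single_eq_same, one_mul, iz]
    have h2 : ∀ x y z : ZMod 2, (x + y) + (x + z) = z + y := by decide
    have h3 : ∀ x y z : ZMod 2, (x + y) + (z + x) = z + y := by decide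
    push_cast
    rcases hpq with ⟨rfl, rfl⟩ | ⟨rfl, rfl⟩
    · exact h2 _ _ _
    · exact h3 _ _ _
  obtain ⟨e, he, h⟩ := hC.cross hw (Finset.filter_subset _ _) ⟨v0, h0⟩ hn
  rcases h with h | h
  · exact h.2 (step e he _ _ (Or.inl ⟨rfl, rfl⟩) h.1)
  · exact h.1 (step e he _ _ (Or.inr ⟨rfl, rfl⟩) h.2)

lemma Ti.join (hw : Feas a b E w) {C : Finset ι} (hC : Ti a b E w C) (τ : V → ZMod 2)
    (h0 : ∀ v, v ∉ vs a b C → τ v = 0) (hs : ∑ v ∈ vs a b C, τ v = 0) :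
    ∃ J : ι → ZMod 2, ∀ u, ∑ e ∈ C, J e * (iz a b e u : ZMod 2) = τ u := by
  obtain ⟨v0, hv0⟩ := vs_ne (a := a) (b := b) hC.ne
  have h1 := hC.join1 hw hv0
  choose! J hJ using h1
  refine ⟨fun e => ∑ v ∈ vs a b C, τ v * J v e, fun u => ?_⟩
  simp only [Finset.sum_mul]
  rw [Finset.sum_comm]
  have : ∀ v ∈ vs a b C, ∑ e ∈ C, τ v * J v e * (iz a b e u : ZMod 2) =
      (if v = u then τ v else 0) + τ v * (if v0 = u then 1 else 0) := by
    intro v hv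
    simp only [mul_assoc, ← Finset.mul_sum]
    rw [hJ v hv u]
    split_ifs <;> simp [mul_add]
  rw [Finset.sum_congr rfl this, Finset.sum_add_distrib, ← Finset.sum_mul, hs, zero_mul, add_zero,
    Finset.sum_ite_eq']
  split_ifs with h
  · rfl
  · exact (h0 u h).symm

/-- Ears are heavy. -/
lemma Ti.ear (hw : Feas a b E w) {C R : Finset ι} (hC : Ti a b E w C) (hR : R ⊆ E)
    (hd : Disjoint R C) (hne : R.Nonempty) (h0 : ∀ v, v ∉ vs a b C → bd a b R v = 0) :
    1 / 2 ≤ ∑ e ∈ R, w e := by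
  have hs : ∑ v ∈ vs a b C, bd a b R v = 0 := by
    rw [← bd_sum (a := a) (b := b) (F := R) (S := vs a b E) (fun e he => ends_vs e (hR he))]
    refine Finset.sum_subset ?_ (fun v _ hv => h0 v hv)
    intro v hv
    obtain ⟨e, he, h⟩ := mem_vs.1 hv
    exact mem_vs.2 ⟨e, hC.sub he, h⟩
  obtain ⟨J, hJ⟩ := hC.join hw _ h0 hs
  set F1 := C.filter (fun e => J e = 1)
  set F2 := C.filter (fun e => ¬ J e = 1)
  have h12 : F1 ∪ F2 = C := Finset.filter_union_filter_not_eq _ _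
  have d12 : Disjoint F1 F2 := Finset.disjoint_filter_filter_not _ _ _
  have hF1 : F1 ⊆ C := Finset.filter_subset _ _
  have hF2 : F2 ⊆ C := Finset.filter_subset _ _
  have d1 : Disjoint R F1 := hd.mono_right hF1
  have d2 : Disjoint R F2 := hd.mono_right hF2
  have b1 : ∀ v, bd a b F1 v = bd a b R v := by
    intro v; rw [bd_filter, hJ]
  have b2 : ∀ v, bd a b F2 v = bd a b R v := by
    intro v
    have h3 := hC.ev v
    rw [← h12, bd_union d12, b1] at h3
    have h4 : ∀ x y : ZMod 2, x + y = 0 → y = x := by decide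
    exact h4 _ _ h3
  have e1 := hw.ev (R ∪ F1) (Finset.union_subset hR (hF1.trans hC.sub))
    (hne.mono Finset.subset_union_left) (fun v => by
      rw [bd_union d1, b1]; exact CharTwo.add_self_eq_zero _)
  have e2 := hw.ev (R ∪ F2) (Finset.union_subset hR (hF2.trans hC.sub))
    (hne.mono Finset.subset_union_left) (fun v => by
      rw [bd_union d2, b2]; exact CharTwo.add_self_eq_zero _)
  have e3 := hC.tight
  rw [Finset.sum_union d1] at e1
  rw [Finset.sum_union d2] at e2
  rw [← h12, Finset.sum_union d12] at e3
  linarith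

lemma Ti.ind (hw : Feas a b E w) {C : Finset ι} (hC : Ti a b E w C) {e : ι} (he : e ∈ E)
    (ha : a e ∈ vs a b C) (hb : b e ∈ vs a b C) : e ∈ C := by
  by_contra h
  have h1 := hC.ear hw (R := {e}) (by simpa using he) (by simpa using h) (by simp) (by
    intro v hv
    simp only [bd, Finset.sum_singleton]
    rw [iz_eq_zero (by grind) (by grind)]; simp)
  have := hw.lt e he
  simp at h1
  linarith

lemma Feas.noloop (hw : Feas a b E w) {e : ι} (he : e ∈ E) : a e ≠ b e := by
  intro h
  have h1 := hw.ev {e} (by simpa using he) (by simp) (by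
    intro v
    simp only [bd, Finset.sum_singleton, iz, h]
    push_cast
    exact CharTwo.add_self_eq_zero _)
  have := hw.lt e he
  simp at h1
  linarith

lemma Feas.nopar (hw : Feas a b E w) {e f : ι} (he : e ∈ E) (hf : f ∈ E)
    (h : (a e = a f ∧ b e = b f) ∨ (a e = b f ∧ b e = a f)) : e = f := by
  by_contra hne
  have h1 := hw.ev {e, f} (by intro c; simp; rintro (rfl | rfl) <;> assumption) (by simp) (by
    intro v
    have h2 : ∀ x y : ZMod 2, (x + y) + (x + y) = 0 := by decide
    have h3 : ∀ x y : ZMod 2, (x + y) + (y + x) = 0 := by decide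
    simp only [bd, Finset.sum_pair hne, iz]
    push_cast
    rcases h with ⟨h, h'⟩ | ⟨h, h'⟩
    · rw [h, h']; exact h2 _ _
    · rw [h, h']; exact h3 _ _)
  have := hw.lt e he
  have := hw.lt f hf
  rw [Finset.sum_pair hne] at h1
  linarith

lemma Ti.cy (hw : Feas a b E w) {C : Finset ι} (hC : Ti a b E w C) :
    Cy (gr a b E) (vs a b C) := by
  refine ⟨⟨vs_ne hC.ne, fun T hT hne hn => ?_⟩, fun v hv => ?_⟩
  · obtain ⟨e, he, h⟩ := hC.cross hw hT hne hn
    have hl := hw.noloop (hC.sub he)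
    have hv := ends_vs (a := a) (b := b) e he
    rcases h with h | h
    · exact ⟨a e, h.1, b e, hv.2, h.2, hl, e, hC.sub he, Or.inl ⟨rfl, rfl⟩⟩
    · exact ⟨b e, h.2, a e, hv.1, h.1, hl.symm, e, hC.sub he, Or.inr ⟨rfl, rfl⟩⟩
  · have h1 := hC.dg_eq hw v hv
    have h2 : dg a b C v = (C.filter (fun e => a e = v ∨ b e = v)).card := by
      rw [Finset.card_filter]
      refine Finset.sum_congr rfl fun e he => ?_
      have := hw.noloop (hC.sub he)
      unfold iz
      grind
    rw [← h1, h2]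
    symm
    refine Finset.card_bij (fun e _ => if a e = v then b e else a e) ?_ ?_ ?_
    · intro e he
      simp only [Finset.mem_filter] at he ⊢
      have hl := hw.noloop (hC.sub he.1)
      have hv := ends_vs (a := a) (b := b) e he.1
      refine ⟨by grind, by grind, e, hC.sub he.1, by grind⟩
    · intro e he f hf h
      simp only [Finset.mem_filter] at he hf
      refine hw.nopar (hC.sub he.1) (hC.sub hf.1) ?_
      grind
    · intro q hq
      simp only [Finset.mem_filter] at hq
      obtain ⟨hq, hvq, e, he, h⟩ := hq
      refine ⟨e, ?_, ?_⟩
      · simp only [Finset.mem_filter]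
        exact ⟨hC.ind hw he (by grind) (by grind), by grind⟩
      · grind

lemma Ti.eq_of_vs (hw : Feas a b E w) {C C' : Finset ι} (hC : Ti a b E w C) (hC' : Ti a b E w C')
    (h : vs a b C' ⊆ vs a b C) : C' = C := by
  refine hC.min hw (fun e he => ?_) hC'.ne hC'.ev
  have := ends_vs (a := a) (b := b) e he
  exact hC.ind hw (hC'.sub he) (h this.1) (h this.2)

lemma Ti.half (hw : Feas a b E w) {C C' : Finset ι} (hC : Ti a b E w C) (hC' : Ti a b E w C')
    {A : Finset V} (hA : A ⊆ vs a b C' \ vs a b C) (hne : A.Nonempty)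
    (hcl : ∀ p ∈ A, ∀ q ∈ vs a b C' \ vs a b C, (gr a b E).Adj p q → q ∈ A) :
    1 / 2 ≤ ∑ e ∈ C'.filter (fun e => a e ∈ A ∨ b e ∈ A), w e := by
  have hA' : ∀ v ∈ A, v ∈ vs a b C' ∧ v ∉ vs a b C := fun v hv => Finset.mem_sdiff.1 (hA hv)
  refine hC.ear hw ((Finset.filter_subset _ _).trans hC'.sub) ?_ ?_ ?_
  · rw [Finset.disjoint_left]
    intro e he he'
    have := ends_vs (a := a) (b := b) e he'
    simp only [Finset.mem_filter] at he
    rcases he.2 with h | h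
    · exact (hA' _ h).2 this.1
    · exact (hA' _ h).2 this.2
  · obtain ⟨v, hv⟩ := hne
    obtain ⟨e, he, h⟩ := mem_vs.1 (hA' v hv).1
    exact ⟨e, by simp only [Finset.mem_filter]; grind⟩
  · intro v hv
    by_cases hvA : v ∈ A
    · rw [← hC'.ev v]
      refine Finset.sum_subset (Finset.filter_subset _ _) fun e he he' => ?_
      simp only [Finset.mem_filter, not_and] at he'
      rw [iz_eq_zero (by grind) (by grind)]; simp
    · refine Finset.sum_eq_zero fun e he => ?_
      simp only [Finset.mem_filter] at he
      have h1 := ends_vs (a := a) (b := b) e he.1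
      have hl := hw.noloop (hC'.sub he.1)
      rw [iz_eq_zero, Nat.cast_zero]
      · rintro rfl
        have h2 := he.2.resolve_left hvA
        exact hvA (hcl _ h2 _ (by simp [h1.1, hv]) ⟨hl.symm, e, hC'.sub he.1, Or.inr ⟨rfl, rfl⟩⟩)
      · rintro rfl
        have h2 := he.2.resolve_right hvA
        exact hvA (hcl _ h2 _ (by simp [h1.2, hv]) ⟨hl, e, hC'.sub he.1, Or.inl ⟨rfl, rfl⟩⟩)

lemma Ti.diff (hw : Feas a b E w) {C C' : Finset ι} (hC : Ti a b E w C) (hC' : Ti a b E w C')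
    (hn : C ≠ C') {e : ι} (he : e ∈ C) (he' : e ∈ C') :
    Cn (gr a b E) (vs a b C' \ vs a b C) := by
  refine ⟨?_, fun A hA hne hAn => ?_⟩
  · rw [Finset.sdiff_nonempty]
    exact fun h => hn (hC.eq_of_vs hw hC' h).symm
  by_contra hcon
  push Not at hcon
  set B := (vs a b C' \ vs a b C) \ A with hB
  have hBs : B ⊆ vs a b C' \ vs a b C := Finset.sdiff_subset
  have hBne : B.Nonempty := by
    rw [hB, Finset.sdiff_nonempty]; exact fun h => hAn (hA.antisymm h)
  have h1 := hC.half hw hC' hA hne (fun p hp q hq hpq => by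
    by_contra h; exact hcon p hp q hq h hpq)
  have h2 := hC.half hw hC' hBs hBne (fun p hp q hq hpq => by
    by_contra h
    have hp' := Finset.mem_sdiff.1 hp
    have hq' : q ∈ A := by
      by_contra h'; exact h (Finset.mem_sdiff.2 ⟨hq, h'⟩)
    exact hcon q hq' p hp'.1 hp'.2 hpq.symm)
  set R1 := C'.filter (fun e => a e ∈ A ∨ b e ∈ A) with hR1
  set R2 := C'.filter (fun e => a e ∈ B ∨ b e ∈ B) with hR2
  have hd : Disjoint R1 R2 := by
    rw [Finset.disjoint_left]
    intro f hf hf'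
    simp only [hR1, hR2, Finset.mem_filter] at hf hf'
    have hl := hw.noloop (hC'.sub hf.1)
    have hBm : ∀ v ∈ B, v ∈ vs a b C' \ vs a b C ∧ v ∉ A := fun v hv => Finset.mem_sdiff.1 hv
    rcases hf.2 with h | h <;> rcases hf'.2 with h' | h'
    · exact (hBm _ h').2 h
    · exact hcon _ h _ (hBm _ h').1 (hBm _ h').2 ⟨hl, f, hC'.sub hf.1, Or.inl ⟨rfl, rfl⟩⟩
    · exact hcon _ h _ (hBm _ h').1 (hBm _ h').2 ⟨hl.symm, f, hC'.sub hf.1, Or.inr ⟨rfl, rfl⟩⟩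
    · exact (hBm _ h').2 h
  have hsub : R1 ∪ R2 ⊆ C' :=
    Finset.union_subset (Finset.filter_subset _ _) (Finset.filter_subset _ _)
  have he12 : e ∉ R1 ∪ R2 := by
    have := ends_vs (a := a) (b := b) e he
    intro h
    simp only [hR1, hR2, Finset.mem_union, Finset.mem_filter] at h
    have hAm : ∀ v ∈ A, v ∉ vs a b C := fun v hv => (Finset.mem_sdiff.1 (hA hv)).2
    have hBm : ∀ v ∈ B, v ∉ vs a b C := fun v hv => (Finset.mem_sdiff.1 (hBs hv)).2
    grind
  have h3 := Finset.sum_lt_sum_of_subset hsub he' he12 (hw.pos e (hC'.sub he'))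
    (fun j hj _ => (hw.pos j (hC'.sub hj)).le)
  rw [Finset.sum_union hd, hC'.tight] at h3
  linarith

end core

lemma Mn.mono {W V : Type} {K : SimpleGraph W} {H H' : SimpleGraph V} (h : H ≤ H') (hm : Mn K H) :
    Mn K H' := by
  obtain ⟨f, h1, h2, h3⟩ := hm
  refine ⟨f, fun w => ⟨(h1 w).1, fun A hA hne hn => ?_⟩, h2, fun w w' hw => ?_⟩
  · obtain ⟨p, hp, q, hq, hqA, hh⟩ := (h1 w).2 A hA hne hn
    exact ⟨p, hp, q, hq, hqA, h hh⟩
  · obtain ⟨p, hp, q, hq, hh⟩ := h3 w w' hw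
    exact ⟨p, hp, q, hq, h hh⟩

lemma gr_mono {V ι : Type} {a b : ι → V} {E E' : Finset ι} (h : E ⊆ E') :
    gr a b E ≤ gr a b E' := by
  intro p q hpq
  obtain ⟨h1, e, he, h2⟩ := hpq
  exact ⟨h1, e, h he, h2⟩

/-- The map identifying `y` with `x`. -/
noncomputable def ct {V : Type} (x y : V) (v : V) : V := if v = y then x else v

/-- Lifting of a branch set. -/
noncomputable def lf {V : Type} (x y : V) (T : Finset V) : Finset V :=
  if x ∈ T then insert y T else T

lemma mem_lf {V : Type} {x y : V} {T : Finset V} (hy : y ∉ T) (v : V) :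
    v ∈ lf x y T ↔ ct x y v ∈ T := by
  unfold lf ct
  split_ifs <;> grind

section contr
variable {V ι : Type} {a b : ι → V} {E : Finset ι} {e0 : ι}

lemma ct_adj {p q : V} (h : (gr (fun e => ct (a e0) (b e0) (a e)) (fun e => ct (a e0) (b e0) (b e))
    (E.erase e0)).Adj p q) :
    ∃ p' q', ct (a e0) (b e0) p' = p ∧ ct (a e0) (b e0) q' = q ∧ (gr a b E).Adj p' q' := by
  obtain ⟨hne, e, he, h⟩ := h
  have he' := Finset.mem_of_mem_erase he
  rcases h with ⟨h1, h2⟩ | ⟨h1, h2⟩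
  · exact ⟨a e, b e, h1, h2, by rintro h; exact hne (by rw [← h1, ← h2]; simp only [h]), e, he',
      Or.inl ⟨rfl, rfl⟩⟩
  · exact ⟨b e, a e, h2, h1, by rintro h; exact hne (by rw [← h1, ← h2]; simp only [h]), e, he',
      Or.inr ⟨rfl, rfl⟩⟩

lemma ct_ne {x y : V} (hl : x ≠ y) (v : V) : ct x y v ≠ y := by
  unfold ct; split_ifs <;> grind

lemma Cn.lf {T : Finset V} (he0 : e0 ∈ E) (hl : a e0 ≠ b e0) (hy : b e0 ∉ T)
    (h : Cn (gr (fun e => ct (a e0) (b e0) (a e)) (fun e => ct (a e0) (b e0) (b e))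
      (E.erase e0)) T) : Cn (gr a b E) (lf (a e0) (b e0) T) := by
  have hadj : (gr a b E).Adj (a e0) (b e0) := ⟨hl, e0, he0, Or.inl ⟨rfl, rfl⟩⟩
  have hm := mem_lf (x := a e0) hy
  have hx : ct (a e0) (b e0) (a e0) = a e0 := by simp [ct]
  have hyx : ct (a e0) (b e0) (b e0) = a e0 := by simp [ct]
  have ho : ∀ v, v ≠ b e0 → ct (a e0) (b e0) v = v := by intro v hv; simp [ct, hv]
  refine ⟨?_, fun A hA hne hn => ?_⟩
  · obtain ⟨t, ht⟩ := h.1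
    refine ⟨t, (hm t).2 ?_⟩
    rw [ho]; exact ht; rintro rfl; exact hy ht
  by_cases h1 : a e0 ∈ A ∧ b e0 ∉ A
  · exact ⟨_, h1.1, _, (hm _).2 (by rw [hyx, ← hx]; exact (hm _).1 (hA h1.1)), h1.2, hadj⟩
  by_cases h2 : a e0 ∉ A ∧ b e0 ∈ A
  · exact ⟨_, h2.2, _, (hm _).2 (by rw [hx, ← hyx]; exact (hm _).1 (hA h2.2)), h2.1, hadj.symm⟩
  have key : ∀ v, v ∈ A ↔ ct (a e0) (b e0) v ∈ A.erase (b e0) := by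
    intro v
    by_cases hv : v = b e0
    · subst hv; rw [hyx]; simp [hl]; tauto
    · rw [ho v hv]; simp [hv]
  obtain ⟨p, hp, q, hq, hqA, hpq⟩ := h.2 (A.erase (b e0)) (by
    intro v hv
    have hv' := Finset.mem_erase.1 hv
    have := (hm v).1 (hA hv'.2)
    rwa [ho v hv'.1] at this) (by
    obtain ⟨v, hv⟩ := hne
    exact ⟨_, (key v).1 hv⟩) (by
    intro hc
    apply hn
    ext v
    rw [key, hm, hc])
  obtain ⟨p', q', h3, h4, h5⟩ := ct_adj hpq
  refine ⟨p', (key _).2 (by rwa [h3]), q', (hm _).2 (by rwa [h4]), ?_, h5⟩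
  rw [key, h4]; exact hqA

lemma Mn.contr {W : Type} {K : SimpleGraph W} (hK : ∀ w, ∃ w', K.Adj w w')
    (he0 : e0 ∈ E) (hl : a e0 ≠ b e0)
    (h : Mn K (gr (fun e => ct (a e0) (b e0) (a e)) (fun e => ct (a e0) (b e0) (b e))
      (E.erase e0))) : Mn K (gr a b E) := by
  obtain ⟨f, h1, h2, h3⟩ := h
  have hiso : ∀ p q, (gr (fun e => ct (a e0) (b e0) (a e)) (fun e => ct (a e0) (b e0) (b e))
      (E.erase e0)).Adj p q → p ≠ b e0 := by
    intro p q hpq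
    obtain ⟨p', q', h3, h4, h5⟩ := ct_adj hpq
    rw [← h3]; exact ct_ne hl _
  have hy : ∀ w, b e0 ∉ f w := by
    intro w hw
    by_cases hc : {b e0} = f w
    · obtain ⟨w', hw'⟩ := hK w
      obtain ⟨p, hp, q, hq, hpq⟩ := h3 w w' hw'
      rw [← hc, Finset.mem_singleton] at hp
      exact hiso p q hpq hp
    · obtain ⟨p, hp, q, hq, hqA, hpq⟩ := (h1 w).2 {b e0} (by simpa using hw) (by simp) hc
      exact hiso p q hpq (Finset.mem_singleton.1 hp)
  refine ⟨fun w => lf (a e0) (b e0) (f w), fun w => (h1 w).lf he0 hl (hy w), fun w w' hw => ?_,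
    fun w w' hw => ?_⟩
  · rw [Finset.disjoint_left]
    intro v hv hv'
    rw [mem_lf (hy _)] at hv hv'
    exact Finset.disjoint_left.1 (h2 w w' hw) hv hv'
  · obtain ⟨p, hp, q, hq, hpq⟩ := h3 w w' hw
    obtain ⟨p', q', h3, h4, h5⟩ := ct_adj hpq
    exact ⟨p', (mem_lf (hy _) _).2 (by rwa [h3]), q', (mem_lf (hy _) _).2 (by rwa [h4]), h5⟩

lemma iz_ct {x y : V} (hl : x ≠ y) (e : ι) (v : V) :
    iz (fun e => ct x y (a e)) (fun e => ct x y (b e)) e v =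
      if v = x then iz a b e x + iz a b e y else if v = y then 0 else iz a b e v := by
  unfold iz ct
  grind

lemma bd_ct {x y : V} (hl : x ≠ y) (F : Finset ι) (v : V) :
    bd (fun e => ct x y (a e)) (fun e => ct x y (b e)) F v =
      if v = x then bd a b F x + bd a b F y else if v = y then 0 else bd a b F v := by
  unfold bd
  simp only [iz_ct hl]
  split_ifs <;> simp [Finset.sum_add_distrib]

lemma Ev.lift {F : Finset ι} (hl : a e0 ≠ b e0) (hF : e0 ∉ F)
    (h : Ev (fun e => ct (a e0) (b e0) (a e)) (fun e => ct (a e0) (b e0) (b e)) F) :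
    Ev a b F ∨ Ev a b (insert e0 F) := by
  have h1 := h (a e0)
  rw [bd_ct hl, if_pos rfl] at h1
  have h2 : ∀ v, v ≠ a e0 → v ≠ b e0 → bd a b F v = 0 := by
    intro v hv hv'
    have := h v
    rwa [bd_ct hl, if_neg hv, if_neg hv'] at this
  have h3 : ∀ x y : ZMod 2, x + y = 0 → x = y := by decide
  have h4 := h3 _ _ h1
  rcases zmod2_cases (bd a b F (a e0)) with h5 | h5
  · left
    intro v
    by_cases hv : v = a e0
    · rw [hv, h5]
    by_cases hv' : v = b e0
    · rw [hv', ← h4, h5]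
    exact h2 v hv hv'
  · right
    intro v
    have h6 : bd a b (insert e0 F) v = (iz a b e0 v : ZMod 2) + bd a b F v :=
      Finset.sum_insert hF
    rw [h6]
    by_cases hv : v = a e0
    · rw [hv, h5]; simp [iz, hl.symm]; rfl
    by_cases hv' : v = b e0
    · rw [hv', ← h4, h5]; simp [iz, hl]; rfl
    rw [h2 v hv hv', iz_eq_zero (by grind) (by grind)]; simp

lemma Ev.push {F : Finset ι} (hl : a e0 ≠ b e0) (h : Ev a b F) :
    Ev (fun e => ct (a e0) (b e0) (a e)) (fun e => ct (a e0) (b e0) (b e)) (F.erase e0) := by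
  intro v
  have h1 : bd (fun e => ct (a e0) (b e0) (a e)) (fun e => ct (a e0) (b e0) (b e)) F v = 0 := by
    rw [bd_ct hl, h, h, h]; simp
  by_cases he : e0 ∈ F
  · rw [← h1]
    unfold bd
    rw [← Finset.add_sum_erase F _ he]
    have : ((iz (fun e => ct (a e0) (b e0) (a e)) (fun e => ct (a e0) (b e0) (b e)) e0 v : ℕ) :
        ZMod 2) = 0 := by
      simp only [iz, ct]
      simp only [if_true]
      split_ifs <;> rfl
    rw [this, zero_add]
  · rw [Finset.erase_eq_of_notMem he]; exact h1

end contr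

/-- The hypotheses of the weighted Euler inequality. -/
structure Go {V ι : Type} (a b : ι → V) (S : Finset V) (E : Finset ι) (w : ι → ℝ) : Prop where
  ends : ∀ e ∈ E, a e ∈ S ∧ b e ∈ S
  nn : ∀ e ∈ E, 0 ≤ w e
  ev : ∀ F ⊆ E, F.Nonempty → Ev a b F → 1 ≤ ∑ e ∈ F, w e
  ex : ∃ F ⊆ E, F.Nonempty ∧ Ev a b F
  m33 : ¬ Mn (completeBipartiteGraph (Fin 3) (Fin 3)) (gr a b E)
  m5 : ¬ Mn (completeGraph (Fin 5)) (gr a b E)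

/-- The induction hypothesis. -/
def IH (V ι : Type) (n : ℕ) : Prop :=
  ∀ (a b : ι → V) (S : Finset V) (E : Finset ι) (w : ι → ℝ), S.card + E.card < n →
    Go a b S E w → (E.card : ℝ) - S.card + 2 ≤ 2 * ∑ e ∈ E, w e

section main
variable {V ι : Type} {a b : ι → V} {S : Finset V} {E : Finset ι} {w : ι → ℝ}

lemma Go.sub (h : Go a b S E w) {S' : Finset V} {E' : Finset ι} (hE : E' ⊆ E)
    (hs : ∀ e ∈ E', a e ∈ S' ∧ b e ∈ S') (hex : ∃ F ⊆ E', F.Nonempty ∧ Ev a b F) :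
    Go a b S' E' w where
  ends := hs
  nn := fun e he => h.nn e (hE he)
  ev := fun F hF => h.ev F (hF.trans hE)
  ex := hex
  m33 := fun hm => h.m33 (hm.mono (gr_mono hE))
  m5 := fun hm => h.m5 (hm.mono (gr_mono hE))

lemma Go.ne (h : Go a b S E w) : S.Nonempty ∧ E.Nonempty := by
  obtain ⟨F, hF, ⟨e, he⟩, _⟩ := h.ex
  exact ⟨⟨a e, (h.ends e (hF he)).1⟩, ⟨e, hF he⟩⟩

lemma Go.lt (ih : IH V ι (S.card + E.card)) (h : Go a b S E w)
    (hbad : 2 * ∑ e ∈ E, w e < (E.card : ℝ) - S.card + 2) : ∀ e ∈ E, w e < 1 / 2 := by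
  intro e he
  by_contra hc
  push Not at hc
  have hcard := Finset.card_erase_add_one he
  have hsum := Finset.add_sum_erase E w he
  by_cases hex : ∃ F ⊆ E.erase e, F.Nonempty ∧ Ev a b F
  · have h1 := ih a b S (E.erase e) w (by omega) (h.sub (Finset.erase_subset _ _)
      (fun f hf => h.ends f (Finset.mem_of_mem_erase hf)) hex)
    rw [← hcard] at hbad
    push_cast at hbad
    linarith
  · have h1 : ¬ S.card ≤ (E.erase e).card := fun hle => hex (exists_even
      (fun f hf => h.ends f (Finset.mem_of_mem_erase hf)) h.ne.1 hle)
    obtain ⟨F, hF, hne, hev⟩ := h.ex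
    have h2 := h.ev F hF hne hev
    have h3 := Finset.sum_le_sum_of_subset_of_nonneg hF (fun f hf _ => h.nn f hf)
    have h4 : E.card ≤ S.card := by omega
    have h5 : (E.card : ℝ) ≤ S.card := by exact_mod_cast h4
    linarith

lemma Go.pos (ih : IH V ι (S.card + E.card)) (h : Go a b S E w)
    (hbad : 2 * ∑ e ∈ E, w e < (E.card : ℝ) - S.card + 2) : ∀ e ∈ E, 0 < w e := by
  intro e he
  rcases (h.nn e he).lt_or_eq with hc | hc
  · exact hc
  exfalso
  have hl : a e ≠ b e := by
    intro hl
    have h1 := h.ev {e} (by simpa using he) (by simp) (by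
      intro v
      simp only [bd, Finset.sum_singleton, iz, hl]
      push_cast
      exact CharTwo.add_self_eq_zero _)
    simp [← hc] at h1
    linarith
  have hcard := Finset.card_erase_add_one he
  have hcS := Finset.card_erase_add_one (h.ends e he).2
  have hsum := Finset.add_sum_erase E w he
  have hg : Go (fun f => ct (a e) (b e) (a f)) (fun f => ct (a e) (b e) (b f))
      (S.erase (b e)) (E.erase e) w := by
    refine ⟨fun f hf => ?_, fun f hf => h.nn f (Finset.mem_of_mem_erase hf), fun F hF hne hev => ?_,
      ?_, fun hm => h.m33 (hm.contr ?_ he hl), fun hm => h.m5 (hm.contr ?_ he hl)⟩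
    · have h1 := h.ends f (Finset.mem_of_mem_erase hf)
      have h2 := h.ends e he
      simp only [Finset.mem_erase]
      refine ⟨⟨ct_ne hl _, ?_⟩, ⟨ct_ne hl _, ?_⟩⟩ <;> unfold ct <;> split_ifs <;> grind
    · have heF : e ∉ F := fun h' => by simpa using hF h'
      have hFE : F ⊆ E := hF.trans (Finset.erase_subset _ _)
      rcases hev.lift hl heF with h1 | h1
      · exact h.ev F hFE hne h1
      · have := h.ev _ (Finset.insert_subset he hFE) (by simp) h1
        rw [Finset.sum_insert heF, ← hc, zero_add] at this
        exact this
    · obtain ⟨F, hF, hne, hev⟩ := h.ex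
      refine ⟨F.erase e, Finset.erase_subset_erase _ hF, ?_, hev.push hl⟩
      by_contra hemp
      rw [Finset.not_nonempty_iff_eq_empty] at hemp
      have h1 := h.ev F hF hne hev
      have h2 : ∑ f ∈ F, w f = 0 := by
        refine Finset.sum_eq_zero fun f hf => ?_
        by_cases hfe : f = e
        · rw [hfe, hc]
        · exact absurd (Finset.mem_erase.2 ⟨hfe, hf⟩) (by simp [hemp])
      linarith
    · rintro (i | i)
      · exact ⟨Sum.inr 0, by simp⟩
      · exact ⟨Sum.inl 0, by simp⟩
    · intro i
      exact ⟨i + 1, by revert i; decide⟩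
  have h1 := ih _ _ _ _ _ (by omega) hg
  rw [← hcard, ← hcS] at hbad
  push_cast at hbad
  linarith

lemma Go.feas (ih : IH V ι (S.card + E.card)) (h : Go a b S E w)
    (hbad : 2 * ∑ e ∈ E, w e < (E.card : ℝ) - S.card + 2) : Feas a b E w :=
  ⟨h.pos ih hbad, h.lt ih hbad, h.ev⟩

lemma Go.vs_sub (h : Go a b S E w) {C : Finset ι} (hC : C ⊆ E) : vs a b C ⊆ S := by
  intro v hv
  obtain ⟨e, he, h1⟩ := mem_vs.1 hv
  have := h.ends e (hC he)
  grind

lemma Go.compl (ih : IH V ι (S.card + E.card)) (h : Go a b S E w)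
    (hbad : 2 * ∑ e ∈ E, w e < (E.card : ℝ) - S.card + 2) {C : Finset ι} (hC : Ti a b E w C) :
    Cn (gr a b E) (S \ vs a b C) := by
  have hw := h.feas ih hbad
  have hvS := h.vs_sub hC.sub
  refine ⟨?_, fun A hA hne hn => ?_⟩
  · rw [Finset.sdiff_nonempty]
    intro hs
    have hEC : E = C := by
      refine (Finset.Subset.antisymm hC.sub fun e he => ?_).symm
      have := h.ends e he
      exact hC.ind hw he (hs this.1) (hs this.2)
    have h1 := hC.card_le hw
    have h2 := Finset.card_le_card hvS
    have h3 := hC.tight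
    rw [← hEC] at h1 h3
    have h4 : (E.card : ℝ) ≤ S.card := by exact_mod_cast h1.trans (hEC ▸ h2)
    linarith
  by_contra hcon
  push Not at hcon
  set B := (S \ vs a b C) \ A with hB
  have hBne : B.Nonempty := by
    rw [hB, Finset.sdiff_nonempty]; exact fun h' => hn (hA.antisymm h')
  have hAS : A ⊆ S := hA.trans Finset.sdiff_subset
  have hBS : B ⊆ S := Finset.sdiff_subset.trans Finset.sdiff_subset
  have hAm : ∀ v, v ∈ A → v ∈ S ∧ v ∉ vs a b C := fun v hv => Finset.mem_sdiff.1 (hA hv)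
  have hBm : ∀ v, v ∈ B ↔ (v ∈ S ∧ v ∉ vs a b C) ∧ v ∉ A := fun v => by
    simp only [hB, Finset.mem_sdiff]
  have hvm : ∀ e ∈ C, a e ∈ vs a b C ∧ b e ∈ vs a b C := ends_vs
  set E1 := E.filter (fun e => a e ∈ S \ B ∧ b e ∈ S \ B) with hE1
  set E2 := E.filter (fun e => a e ∈ S \ A ∧ b e ∈ S \ A) with hE2
  have hi : E1 ∩ E2 = C := by
    ext e
    simp only [hE1, hE2, Finset.mem_inter, Finset.mem_filter, Finset.mem_sdiff, hBm]
    constructor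
    · rintro ⟨⟨he, h1, h2⟩, ⟨_, h3, h4⟩⟩
      refine hC.ind hw he ?_ ?_
      · by_contra h'; exact h1.2 ⟨⟨h1.1, h'⟩, h3.2⟩
      · by_contra h'; exact h2.2 ⟨⟨h2.1, h'⟩, h4.2⟩
    · intro he
      have h1 := h.ends e (hC.sub he)
      have h2 := hvm e he
      have h3 : a e ∉ A := fun h' => (hAm _ h').2 h2.1
      have h4 : b e ∉ A := fun h' => (hAm _ h').2 h2.2
      have h5 := hC.sub he
      tauto
  have hu : E1 ∪ E2 = E := by
    ext e
    simp only [hE1, hE2, Finset.mem_union, Finset.mem_filter, Finset.mem_sdiff]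
    constructor
    · tauto
    · intro he
      have h1 := h.ends e he
      have hl := hw.noloop he
      have hBm' : ∀ v, v ∈ B → v ∈ S \ vs a b C ∧ v ∉ A := fun v hv => Finset.mem_sdiff.1 hv
      by_contra hc
      have h2 : (a e ∈ B ∨ b e ∈ B) ∧ (a e ∈ A ∨ b e ∈ A) := by tauto
      rcases h2.1 with h' | h' <;> rcases h2.2 with h'' | h''
      · exact (hBm' _ h').2 h''
      · exact hcon _ h'' _ (hBm' _ h').1 (hBm' _ h').2 ⟨hl.symm, e, he, Or.inr ⟨rfl, rfl⟩⟩
      · exact hcon _ h'' _ (hBm' _ h').1 (hBm' _ h').2 ⟨hl, e, he, Or.inl ⟨rfl, rfl⟩⟩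
      · exact (hBm' _ h').2 h''
  have hc := Finset.card_union_add_card_inter E1 E2
  have hs := Finset.sum_union_inter (s₁ := E1) (s₂ := E2) (f := w)
  rw [hu, hi] at hc hs
  rw [hC.tight] at hs
  have hC1 : C ⊆ E1 := hi ▸ Finset.inter_subset_left
  have hC2 : C ⊆ E2 := hi ▸ Finset.inter_subset_right
  have hs1 : E1 ⊆ E := Finset.filter_subset _ _
  have hs2 : E2 ⊆ E := Finset.filter_subset _ _
  have hSA := Finset.card_sdiff_add_card_eq_card hAS
  have hSB := Finset.card_sdiff_add_card_eq_card hBS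
  have hA1 := Finset.card_pos.2 hne
  have hB1 := Finset.card_pos.2 hBne
  have hk1 := Finset.card_le_card hs1
  have hk2 := Finset.card_le_card hs2
  have hBA := Finset.card_sdiff_add_card_eq_card hA
  have hSC := Finset.card_sdiff_add_card_eq_card hvS
  have i1 := ih a b (S \ B) E1 w (by omega) (h.sub hs1
    (fun e he => (Finset.mem_filter.1 he).2) ⟨C, hC1, hC.ne, hC.ev⟩)
  have i2 := ih a b (S \ A) E2 w (by omega) (h.sub hs2
    (fun e he => (Finset.mem_filter.1 he).2) ⟨C, hC2, hC.ne, hC.ev⟩)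
  have hv : C.card = (vs a b C).card := by
    have h1 := dg_sum (a := a) (b := b) (F := C) ends_vs
    rw [Finset.sum_congr rfl (hC.dg_eq hw)] at h1
    simp at h1
    omega
  have k1 : ((S \ B).card : ℝ) + (S \ A).card = S.card + C.card := by
    have : (S \ B).card + (S \ A).card = S.card + C.card := by rw [← hB] at hBA; omega
    exact_mod_cast this
  have k2 : (E.card : ℝ) + C.card = E1.card + E2.card := by exact_mod_cast hc
  linarith

lemma Go.two (ih : IH V ι (S.card + E.card)) (h : Go a b S E w)
    (hbad : 2 * ∑ e ∈ E, w e < (E.card : ℝ) - S.card + 2) {C1 C2 C3 : Finset ι}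
    (h1 : Ti a b E w C1) (h2 : Ti a b E w C2) (h3 : Ti a b E w C3)
    (h12 : C1 ≠ C2) (h13 : C1 ≠ C3) (h23 : C2 ≠ C3) {e : ι} (e1 : e ∈ C1) (e2 : e ∈ C2)
    (e3 : e ∈ C3) : False := by
  have hw := h.feas ih hbad
  exact three_cycles (H := gr a b E) (S := S) (x := a e) (y := b e)
    (h.vs_sub h1.sub) (h.vs_sub h2.sub) (h.vs_sub h3.sub) (h1.cy hw) (h2.cy hw) (h3.cy hw)
    (h.compl ih hbad h1) (h.compl ih hbad h2) (h.compl ih hbad h3)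
    (h2.diff hw h1 h12.symm e2 e1) (h1.diff hw h2 h12 e1 e2)
    (h3.diff hw h1 h13.symm e3 e1) (h1.diff hw h3 h13 e1 e3)
    (h3.diff hw h2 h23.symm e3 e2) (h2.diff hw h3 h23 e2 e3)
    (ends_vs e e1).1 (ends_vs e e2).1 (ends_vs e e3).1
    (ends_vs e e1).2 (ends_vs e e2).2 (ends_vs e e3).2
    ⟨hw.noloop (h1.sub e1), e, h1.sub e1, Or.inl ⟨rfl, rfl⟩⟩ h.m33 h.m5

/-- The finset of tight sets. -/
noncomputable def tt (a b : ι → V) (E : Finset ι) (w : ι → ℝ) : Finset (Finset ι) :=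
  E.powerset.filter (fun C => Ti a b E w C)

lemma mem_tt {C : Finset ι} : C ∈ tt a b E w ↔ Ti a b E w C := by
  simp only [tt, Finset.mem_filter, Finset.mem_powerset]
  exact ⟨fun h => h.2, fun h => ⟨h.sub, h⟩⟩

lemma Go.card (ih : IH V ι (S.card + E.card)) (h : Go a b S E w)
    (hbad : 2 * ∑ e ∈ E, w e < (E.card : ℝ) - S.card + 2) : (tt a b E w).card < E.card := by
  have hw := h.feas ih hbad
  have h1 : ∀ C ∈ tt a b E w, 3 ≤ C.card := by
    intro C hC
    rw [mem_tt] at hC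
    by_contra hc
    have h2 : C.card ≤ 2 := by omega
    have h3 := Finset.sum_lt_sum_of_nonempty hC.ne (fun e he => hw.lt e (hC.sub he))
    rw [hC.tight] at h3
    simp at h3
    have h4 : (C.card : ℝ) ≤ 2 := by exact_mod_cast h2
    linarith
  have h2 : ∀ e ∈ E, ((tt a b E w).filter (fun C => e ∈ C)).card ≤ 2 := by
    intro e he
    by_contra hc
    push Not at hc
    obtain ⟨C1, C2, C3, m1, m2, m3, h12, h13, h23⟩ := Finset.two_lt_card_iff.1 hc
    simp only [Finset.mem_filter, mem_tt] at m1 m2 m3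
    exact h.two ih hbad m1.1 m2.1 m3.1 h12 h13 h23 m1.2 m2.2 m3.2
  have h3 : ∑ C ∈ tt a b E w, C.card = ∑ e ∈ E, ((tt a b E w).filter (fun C => e ∈ C)).card := by
    simp only [Finset.card_filter]
    rw [Finset.sum_comm]
    refine Finset.sum_congr rfl fun C hC => ?_
    rw [← Finset.card_filter]
    congr 1
    ext e
    simp only [Finset.mem_filter]
    exact ⟨fun he => ⟨(mem_tt.1 hC).sub he, he⟩, fun he => he.2⟩
  have h4 := Finset.sum_le_sum h1
  have h5 := Finset.sum_le_sum h2
  have h6 := Finset.card_pos.2 h.ne.2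
  simp at h4 h5
  omega

lemma Go.step (ih : IH V ι (S.card + E.card)) (h : Go a b S E w)
    (hbad : 2 * ∑ e ∈ E, w e < (E.card : ℝ) - S.card + 2) :
    ∃ w', Go a b S E w' ∧ 2 * ∑ e ∈ E, w' e < (E.card : ℝ) - S.card + 2 ∧
      (tt a b E w).card < (tt a b E w').card := by
  have hw := h.feas ih hbad
  obtain ⟨z, hzE, hz0, hzt⟩ : ∃ z : ι → ℝ, (∑ e ∈ E, z e ≤ 0) ∧ (∃ e ∈ E, z e ≠ 0) ∧
      ∀ C, Ti a b E w C → ∑ e ∈ C, z e = 0 := by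
    obtain ⟨J, ⟨e, he, hJe⟩, hJ⟩ := exists_ker (K := ℝ) E (tt a b E w)
      (fun e C => if e ∈ C then 1 else 0) (h.card ih hbad)
    have hJ' : ∀ C, Ti a b E w C → ∑ e ∈ C, J e = 0 := by
      intro C hC
      rw [← hJ C (mem_tt.2 hC)]
      simp only [mul_ite, mul_one, mul_zero]
      rw [← Finset.sum_filter]
      congr 1
      ext f
      simp only [Finset.mem_filter]
      exact ⟨fun he => ⟨hC.sub he, he⟩, fun he => he.2⟩
    rcases le_total (∑ e ∈ E, J e) 0 with h0 | h0
    · exact ⟨J, h0, ⟨e, he, hJe⟩, hJ'⟩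
    · refine ⟨fun e => - J e, by simpa using h0, ⟨e, he, by simpa using hJe⟩, fun C hC => ?_⟩
      simp [hJ' C hC]
  obtain ⟨e1, he1, hz1⟩ : ∃ e ∈ E, z e < 0 := by
    by_contra hc
    push Not at hc
    have h0 := (Finset.sum_eq_zero_iff_of_nonneg hc).1 (le_antisymm hzE (Finset.sum_nonneg hc))
    obtain ⟨e, he, hne⟩ := hz0
    exact hne (h0 e he)
  set R1 := (E.filter (fun e => z e < 0)).image (fun e => w e / (- z e)) with hR1
  set R2 := (E.powerset.filter (fun F => F.Nonempty ∧ Ev a b F ∧ ∑ e ∈ F, z e < 0)).image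
    (fun F => (∑ e ∈ F, w e - 1) / (- ∑ e ∈ F, z e)) with hR2
  have hRne : (R1 ∪ R2).Nonempty :=
    ⟨w e1 / (- z e1), by simp only [hR1, Finset.mem_union, Finset.mem_image, Finset.mem_filter];
                         exact Or.inl ⟨e1, ⟨he1, hz1⟩, rfl⟩⟩
  set t := (R1 ∪ R2).min' hRne with ht
  have htm : t ∈ R1 ∪ R2 := Finset.min'_mem _ _
  have htl : ∀ s ∈ R1 ∪ R2, t ≤ s := fun s hs => Finset.min'_le _ _ hs
  have hpos : 0 < t := by
    rcases Finset.mem_union.1 htm with hm | hm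
    · simp only [hR1, Finset.mem_image, Finset.mem_filter] at hm
      obtain ⟨e, ⟨he, hze⟩, hte⟩ := hm
      rw [← hte]
      exact div_pos (hw.pos e he) (by linarith)
    · simp only [hR2, Finset.mem_image, Finset.mem_filter, Finset.mem_powerset] at hm
      obtain ⟨F, ⟨hF, hne, hev, hzF⟩, hte⟩ := hm
      rw [← hte]
      refine div_pos ?_ (by linarith)
      rcases (hw.ev F hF hne hev).lt_or_eq with h1 | h1
      · linarith
      · have := hzt F ⟨hF, hne, hev, h1.symm⟩
        linarith
  have hsum : ∀ F : Finset ι, ∑ e ∈ F, (w e + t * z e) = ∑ e ∈ F, w e + t * ∑ e ∈ F, z e := by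
    intro F; rw [Finset.sum_add_distrib, Finset.mul_sum]
  have hgo : Go a b S E (fun e => w e + t * z e) := by
    refine ⟨h.ends, fun e he => ?_, fun F hF hne hev => ?_, h.ex, h.m33, h.m5⟩
    · by_cases hze : z e < 0
      · have h1 := htl (w e / (- z e)) (by
          simp only [hR1, Finset.mem_union, Finset.mem_image, Finset.mem_filter]
          exact Or.inl ⟨e, ⟨he, hze⟩, rfl⟩)
        rw [le_div_iff₀ (by linarith)] at h1
        linarith
      · push Not at hze
        have := mul_nonneg hpos.le hze
        have := hw.pos e he
        linarith
    · rw [hsum]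
      by_cases hzF : ∑ e ∈ F, z e < 0
      · have h1 := htl ((∑ e ∈ F, w e - 1) / (- ∑ e ∈ F, z e)) (by
          simp only [hR2, Finset.mem_union, Finset.mem_image, Finset.mem_filter,
            Finset.mem_powerset]
          exact Or.inr ⟨F, ⟨hF, hne, hev, hzF⟩, rfl⟩)
        rw [le_div_iff₀ (by linarith)] at h1
        linarith
      · push Not at hzF
        have := mul_nonneg hpos.le hzF
        have := hw.ev F hF hne hev
        linarith
  have hbad' : 2 * ∑ e ∈ E, (w e + t * z e) < (E.card : ℝ) - S.card + 2 := by
    rw [hsum]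
    have := mul_nonpos_of_nonneg_of_nonpos hpos.le hzE
    linarith
  refine ⟨_, hgo, hbad', Finset.card_lt_card ?_⟩
  have hw' := hgo.feas ih hbad'
  rw [Finset.ssubset_iff_of_subset]
  · rcases Finset.mem_union.1 htm with hm | hm
    · exfalso
      simp only [hR1, Finset.mem_image, Finset.mem_filter] at hm
      obtain ⟨e, ⟨he, hze⟩, hte⟩ := hm
      have h1 := hw'.pos e he
      rw [div_eq_iff (by linarith)] at hte
      linarith
    · simp only [hR2, Finset.mem_image, Finset.mem_filter, Finset.mem_powerset] at hm
      obtain ⟨F, ⟨hF, hne, hev, hzF⟩, hte⟩ := hm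
      rw [div_eq_iff (by linarith)] at hte
      refine ⟨F, mem_tt.2 ⟨hF, hne, hev, ?_⟩, fun hc => ?_⟩
      · rw [hsum]; linarith
      · have := hzt F (mem_tt.1 hc)
        linarith
  · intro C hC
    rw [mem_tt] at hC ⊢
    exact ⟨hC.sub, hC.ne, hC.ev, by rw [hsum, hC.tight, hzt C hC]; simp⟩

lemma Go.no_bad (ih : IH V ι (S.card + E.card)) : ∀ k : ℕ, ∀ w : ι → ℝ, Go a b S E w →
    2 * ∑ e ∈ E, w e < (E.card : ℝ) - S.card + 2 → E.card ≤ (tt a b E w).card + k → False := by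
  intro k
  induction k with
  | zero =>
    intro w h hbad hk
    have := h.card ih hbad
    omega
  | succ k hk =>
    intro w h hbad hc
    obtain ⟨w', h1, h2, h3⟩ := h.step ih hbad
    exact hk w' h1 h2 (by omega)

end main

/-- Weighted Euler inequality. -/
theorem euler_ineq {V ι : Type} : ∀ n, IH V ι n := by
  intro n
  induction n with
  | zero => intro a b S E w h; omega
  | succ n hn =>
    intro a b S E w hlt h
    by_contra hc
    push Not at hc
    have ih : IH V ι (S.card + E.card) := fun a b S' E' w' h' => hn a b S' E' w' (by omega)
    exact Go.no_bad ih E.card w h hc (by omega)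

lemma Cn.connected {V : Type} {H : SimpleGraph V} {T : Finset V} (h : Cn H T) :
    (H.induce (T : Set V)).Connected := by
  rw [SimpleGraph.connected_iff]
  refine ⟨fun u v => ?_, h.1.to_subtype⟩
  set A := T.filter (fun x => ∃ hx : x ∈ (T : Set V), (H.induce (T : Set V)).Reachable u ⟨x, hx⟩)
    with hA
  have hu : u.1 ∈ A := by
    simp only [hA, Finset.mem_filter]
    exact ⟨u.2, u.2, SimpleGraph.Reachable.refl _⟩
  have hAT : A = T := by
    by_contra hn
    obtain ⟨p, hp, q, hq, hqA, hpq⟩ := h.2 A (Finset.filter_subset _ _) ⟨_, hu⟩ hn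
    simp only [hA, Finset.mem_filter] at hp
    obtain ⟨_, hp, hr⟩ := hp
    apply hqA
    simp only [hA, Finset.mem_filter]
    refine ⟨hq, hq, hr.trans (SimpleGraph.Adj.reachable ?_)⟩
    simpa using hpq
  have hv : v.1 ∈ A := by rw [hAT]; exact v.2
  simp only [hA, Finset.mem_filter] at hv
  exact hv.2.2

lemma Mn.isMinorOf {W V : Type} {K : SimpleGraph W} {H : SimpleGraph V} (h : Mn K H) :
    K.IsMinorOf H := by
  obtain ⟨f, h1, h2, h3⟩ := h
  refine ⟨fun w => (f w : Set V), fun w => (h1 w).connected, fun w w' hw => ?_, fun w w' hw => ?_⟩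
  · exact Finset.disjoint_coe.2 (h2 w w' hw)
  · obtain ⟨p, hp, q, hq, hh⟩ := h3 w w' hw
    exact ⟨p, hp, q, hq, hh⟩

/-- First end of an edge. -/
noncomputable def ea {V : Type} (e : Sym2 V) : V := (Quot.out e).1

/-- Second end of an edge. -/
noncomputable def eb {V : Type} (e : Sym2 V) : V := (Quot.out e).2

lemma eab {V : Type} (e : Sym2 V) : s(ea e, eb e) = e := Quot.out_eq e

lemma not_acyclic {V : Type} [Fintype V] {G : SimpleGraph V} {F : Finset (Sym2 V)}
    (hF : ∀ e ∈ F, e ∈ G.edgeSet) (hne : F.Nonempty) (hev : Ev ea eb F) :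
    ¬ (SimpleGraph.fromEdgeSet (F : Set (Sym2 V))).IsAcyclic := by
  intro hac
  obtain ⟨e0, he0⟩ := hne
  have hnd : ∀ e ∈ F, ea e ≠ eb e := by
    intro e he
    have h1 := hF e he
    rw [← eab e, SimpleGraph.mem_edgeSet] at h1
    exact h1.ne
  have hadj : ∀ e ∈ F, (SimpleGraph.fromEdgeSet (F : Set (Sym2 V))).Adj (ea e) (eb e) := by
    intro e he
    rw [SimpleGraph.fromEdgeSet_adj, eab]
    exact ⟨he, hnd e he⟩
  have hb := SimpleGraph.isAcyclic_iff_forall_adj_isBridge.1 hac (hadj e0 he0)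
  rw [SimpleGraph.isBridge_iff, eab] at hb
  set H' := (SimpleGraph.fromEdgeSet (F : Set (Sym2 V))).deleteEdges {e0} with hH'
  set T := Finset.univ.filter (fun v => H'.Reachable (ea e0) v) with hT
  have hTm : ∀ v, v ∈ T ↔ H'.Reachable (ea e0) v := by intro v; simp [hT]
  have h1 : ∑ v ∈ T, bd ea eb F v = 0 := Finset.sum_eq_zero fun v _ => hev v
  have h2 : ∀ e, ∑ v ∈ T, (iz ea eb e v : ZMod 2) =
      (if ea e ∈ T then 1 else 0) + (if eb e ∈ T then 1 else 0) := by
    intro e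
    simp [iz, Finset.sum_add_distrib]
  unfold bd at h1
  rw [Finset.sum_comm, Finset.sum_eq_single e0] at h1
  · rw [h2, if_pos ((hTm _).2 (SimpleGraph.Reachable.refl _)), if_neg (by rwa [hTm])] at h1
    exact absurd h1 (by decide)
  · intro e he hee
    have ha : H'.Adj (ea e) (eb e) := by
      rw [hH', SimpleGraph.deleteEdges_adj, eab]
      exact ⟨hadj e he, by simpa using hee⟩
    rw [h2]
    by_cases h3 : ea e ∈ T
    · have h4 : eb e ∈ T := (hTm _).2 (((hTm _).1 h3).trans ha.reachable)
      rw [if_pos h3, if_pos h4]; rfl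
    · have h4 : eb e ∉ T := fun h4 => h3 ((hTm _).2 (((hTm _).1 h4).trans ha.symm.reachable))
      rw [if_neg h3, if_neg h4]; rfl
  · intro h; exact absurd he0 h

lemma girth_le_even {V : Type} [Fintype V] {G : SimpleGraph V} {F : Finset (Sym2 V)}
    (hF : ∀ e ∈ F, e ∈ G.edgeSet) (hne : F.Nonempty) (hev : Ev ea eb F) : G.girth ≤ F.card := by
  have hn := not_acyclic hF hne hev
  obtain ⟨u, p, hp, hl⟩ := SimpleGraph.exists_girth_eq_length.2 hn
  have hle : SimpleGraph.fromEdgeSet (F : Set (Sym2 V)) ≤ G := by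
    intro x y hxy
    rw [SimpleGraph.fromEdgeSet_adj] at hxy
    exact hF _ hxy.1
  refine (SimpleGraph.girth_anti hle hn).trans ?_
  rw [hl, ← p.length_edges, ← List.toFinset_card_of_nodup hp.1.1.edges_nodup]
  refine Finset.card_le_card fun e he => ?_
  have h1 := p.edges_subset_edgeSet (List.mem_toFinset.1 he)
  rw [SimpleGraph.edgeSet_fromEdgeSet] at h1
  exact h1.1

lemma planar_bound (r m g : ℕ) (hr : 2 ≤ r) (hrm : r < m) (hg : 3 ≤ g) {V : Type} [Fintype V]
    (G : SimpleGraph V) (hp : G.IsPlanar) (hG : IsBigirthGraph G r m g) :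
    r * g < 2 * g + 2 * r := by
  obtain ⟨hgi, hd, ⟨v0, _⟩, _⟩ := hG
  have hdeg : ∀ v, r ≤ G.degree v := by
    intro v
    have h1 : G.degN v = G.degree v := by
      unfold SimpleGraph.degN
      rw [Set.ncard_eq_toFinset_card', ← SimpleGraph.card_neighborFinset_eq_degree]
      rfl
    have := hd v
    omega
  have hsum := G.sum_degrees_eq_twice_card_edges
  have hrV : r * Fintype.card V ≤ 2 * G.edgeFinset.card := by
    rw [← hsum]
    have := Finset.sum_le_sum (s := Finset.univ) (fun v _ => hdeg v)
    simp at this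
    linarith
  have hle : gr ea eb G.edgeFinset ≤ G := by
    intro x y hxy
    obtain ⟨hne, e, he, h⟩ := hxy
    rw [SimpleGraph.mem_edgeFinset, ← eab e] at he
    rcases h with ⟨rfl, rfl⟩ | ⟨rfl, rfl⟩
    · exact he
    · exact (SimpleGraph.mem_edgeSet G).1 he |>.symm
  have hends : ∀ e ∈ G.edgeFinset, ea e ∈ (Finset.univ : Finset V) ∧ eb e ∈ (Finset.univ : Finset V) :=
    by simp
  have hgp : (0 : ℝ) < g := by exact_mod_cast (by omega : 0 < g)
  have hgo : Go ea eb (Finset.univ : Finset V) G.edgeFinset (fun _ => 1 / (g : ℝ)) := by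
    refine ⟨hends, fun _ _ => by positivity, fun F hF hne hev => ?_, ?_, ?_, ?_⟩
    · have h1 := girth_le_even (G := G) (fun e he => SimpleGraph.mem_edgeFinset.1 (hF he)) hne hev
      rw [hgi] at h1
      have h2 : (g : ℝ) ≤ F.card := by exact_mod_cast h1
      simp only [Finset.sum_const, nsmul_eq_mul, mul_one_div]
      rwa [le_div_iff₀ hgp, one_mul]
    · refine exists_even hends ⟨v0, Finset.mem_univ _⟩ ?_
      rw [Finset.card_univ]
      nlinarith
    · exact fun hm => hp.2 (hm.mono hle).isMinorOf
    · exact fun hm => hp.1 (hm.mono hle).isMinorOf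
  have h := euler_ineq _ _ _ _ _ _ (Nat.lt_succ_self _) hgo
  simp only [Finset.sum_const, nsmul_eq_mul, mul_one_div, Finset.card_univ] at h
  rw [← mul_div_assoc, le_div_iff₀ hgp] at h
  have h1 : (r : ℝ) * Fintype.card V ≤ 2 * G.edgeFinset.card := by exact_mod_cast hrV
  have hrp : (0 : ℝ) < r := by exact_mod_cast (by omega : 0 < r)
  by_contra hc
  push Not at hc
  have hc' : (2 : ℝ) * g + 2 * r ≤ r * g := by exact_mod_cast hc
  have hEn : (0 : ℝ) ≤ G.edgeFinset.card := by positivity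
  have k1 := mul_le_mul_of_nonneg_left h hrp.le
  have k2 := mul_le_mul_of_nonneg_left h1 hgp.le
  have k3 := mul_le_mul_of_nonneg_left hc' hEn
  have k4 := mul_pos hrp hgp
  nlinarith

end PlanarEuler

/-- If there exists a finite planar `({r,m};g)`-graph (with
`2 ≤ r < m`, `g ≥ 3`), then `r(2−g) + 2g > 0`; equivalently one of: `g = 3` and
`2 ≤ r ≤ 5`; `g = 4` and `2 ≤ r ≤ 3`; `g = 5` and `2 ≤ r ≤ 3`; or `g ≥ 6` and `r = 2`. -/
theorem planar_bigirth_triplets (r m g : ℕ) (hr : 2 ≤ r) (hrm : r < m) (hg : 3 ≤ g)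
    (h : ∃ (V : Type) (_ : Fintype V) (G : SimpleGraph V),
      G.IsPlanar ∧ IsBigirthGraph G r m g) :
    0 < (r : ℤ) * (2 - g) + 2 * g ∧
      ((g = 3 ∧ 2 ≤ r ∧ r ≤ 5) ∨ (g = 4 ∧ 2 ≤ r ∧ r ≤ 3) ∨
        (g = 5 ∧ 2 ≤ r ∧ r ≤ 3) ∨ (6 ≤ g ∧ r = 2)) := by
  obtain ⟨V, hV, G, hp, hG⟩ := h
  have hb := planar_bound r m g hr hrm hg G hp hG
  have h0 : 0 < (r : ℤ) * (2 - g) + 2 * g := by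
    have : (r : ℤ) * g < 2 * g + 2 * r := by exact_mod_cast hb
    linarith
  refine ⟨h0, ?_⟩
  by_cases h3 : g = 3
  · subst h3; left; omega
  by_cases h4 : g = 4
  · subst h4; right; left; omega
  by_cases h5 : g = 5
  · subst h5; right; right; left; omega
  right; right; right
  refine ⟨by omega, ?_⟩
  by_contra hne
  obtain ⟨k, rfl⟩ : ∃ k, r = 3 + k := ⟨r - 3, by omega⟩
  obtain ⟨l, rfl⟩ : ∃ l, g = 6 + l := ⟨g - 6, by omega⟩
  nlinarith [Nat.zero_le (k * l)]
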